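/- arXiv:1511.04631 — 8 statements merged into one kernel-verified Lean document; each statement's English description precedes it below -/
import Mathlib

section
/- For every connected finite simple graph G = (V,E) and every natural number k ≥ 1, if |V| ≥ k + 1 then G has a k-covering of size at most ⌊|V| / (k+1)⌋, i.e., there exists a set Z ⊆ V with |Z| ≤ ⌊|V|/(k+1)⌋ such that every vertex v ∈ V has some z ∈ Z with graph distance (hop distance in the unweighted graph G) at most k from v. -/
/-!
Pass to a spanning tree `T` and let `r`, `s` be two vertices at maximal `T`-distance `L`.
If `L ≤ k`, the single vertex `r` is a `k`-covering. Otherwise split the vertices into `k + 1` classes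
according to `T.dist r v` modulo `k + 1`; by pigeonhole some class `i` has at most
`|V| / (k + 1)` elements, and every class is a `k`-covering. Indeed, a vertex of depth at
least `i` has an ancestor in the class at distance at most `k` (`exists_dist_eq_of_le_dist`).
For a vertex `v` of depth less than `i`, take the vertex `p` of depth `i` on the path from `r` to
`s`. The path from `v` to `s` passes through `p` (`dist_add_dist_eq_or`), so maximality of `L`
gives `dist v p = dist v s - (L - i) ≤ i ≤ k`.
-/

lemma exists_dist_eq_of_le_dist {V : Type*} {G : SimpleGraph V} (hG : G.Connected) {r v : V}
    {m : ℕ} (hm : m ≤ G.dist r v) :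
    ∃ u, G.dist r u = m ∧ G.dist r u + G.dist u v = G.dist r v := by
  obtain ⟨w, hw⟩ := hG.exists_walk_length_eq_dist r v
  have h1 := SimpleGraph.dist_le (w.take m)
  have h2 := SimpleGraph.dist_le (w.drop m)
  have h3 := hG.dist_triangle (u := r) (v := w.getVert m) (w := v)
  rw [SimpleGraph.Walk.take_length] at h1
  rw [SimpleGraph.Walk.drop_length] at h2
  exact ⟨w.getVert m, by omega, by omega⟩

lemma dist_add_dist_of_mem_support {V : Type*} [DecidableEq V] {G : SimpleGraph V}
    (hG : G.Connected) {r v p : V} (w : G.Walk r v) (hw : w.length = G.dist r v)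
    (hp : p ∈ w.support) : G.dist r p + G.dist p v = G.dist r v := by
  have h1 := SimpleGraph.dist_le (w.takeUntil p hp)
  have h2 := SimpleGraph.dist_le (w.dropUntil p hp)
  have h3 := hG.dist_triangle (u := r) (v := p) (w := v)
  have h4 := congrArg SimpleGraph.Walk.length (w.take_spec hp)
  rw [SimpleGraph.Walk.length_append] at h4
  omega

/-- In a tree, a vertex `p` on the path from `r` to `s` lies on the path from `r` to `v` or on the
path from `v` to `s`, for every vertex `v`. Betweenness is expressed by additivity of distances. -/
lemma dist_add_dist_eq_or {V : Type*} [DecidableEq V] {T : SimpleGraph V} (hT : T.IsTree)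
    {r s p : V} (hp : T.dist r p + T.dist p s = T.dist r s) (v : V) :
    T.dist r p + T.dist p v = T.dist r v ∨ T.dist v p + T.dist p s = T.dist v s := by
  have hc := hT.connected
  obtain ⟨a, ha⟩ := hc.exists_walk_length_eq_dist r p
  obtain ⟨b, hb⟩ := hc.exists_walk_length_eq_dist p s
  obtain ⟨q, hq⟩ := hc.exists_walk_length_eq_dist r v
  obtain ⟨w, hw⟩ := hc.exists_walk_length_eq_dist v s
  have hab : (a.append b).IsPath := by
    apply SimpleGraph.Walk.isPath_of_length_eq_dist
    rw [SimpleGraph.Walk.length_append]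
    omega
  -- Paths in a tree are unique, so the path through `p` is the shortcut of the walk through `v`.
  have huniq : a.append b = (q.append w).bypass :=
    (hT.existsUnique_path r s).unique hab (SimpleGraph.Walk.bypass_isPath _)
  have hmem : p ∈ (q.append w).support := by
    apply SimpleGraph.Walk.support_bypass_subset_support
    rw [← huniq, SimpleGraph.Walk.mem_support_append_iff]
    exact Or.inl a.end_mem_support
  rw [SimpleGraph.Walk.mem_support_append_iff] at hmem
  exact hmem.imp (dist_add_dist_of_mem_support hc q hq) (dist_add_dist_of_mem_support hc w hw)

/-- **Existence of small `k`-coverings.**  Every connected finite simple graph on at least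
`k + 1` vertices has a `k`-covering of size at most `⌊|V| / (k+1)⌋`: a set `Z` of vertices
such that every vertex is within hop distance `k` of some vertex of `Z`. -/
theorem exists_small_kCovering {V : Type*} [Fintype V] [DecidableEq V]
    (G : SimpleGraph V) (hG : G.Connected) (k : ℕ) (hk : 1 ≤ k)
    (hV : k + 1 ≤ Fintype.card V) :
    ∃ Z : Finset V, Z.card ≤ Fintype.card V / (k + 1) ∧
      ∀ v : V, ∃ z ∈ Z, G.dist v z ≤ k := by
  obtain ⟨T, hTG, hT⟩ := hG.exists_isTree_le
  have hc := hT.connected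
  have hle : ∀ u v, G.dist u v ≤ T.dist u v := fun u v => (hc u v).dist_anti hTG
  have := hG.nonempty
  obtain ⟨⟨r, s⟩, hmax⟩ := Finite.exists_max (fun x : V × V => T.dist x.1 x.2)
  have hmax' : ∀ u v, T.dist u v ≤ T.dist r s := fun u v => hmax (u, v)
  rcases Nat.lt_or_ge k (T.dist r s) with hL | hL
  swap
  · refine ⟨{r}, ?_, fun v => ⟨r, by simp, (hle v r).trans ((hmax' v r).trans hL)⟩⟩
    rw [Finset.card_singleton]
    exact Nat.div_pos hV (by omega)
  obtain ⟨i, hi, hcard⟩ : ∃ i ∈ Finset.range (k + 1),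
      (Finset.univ.filter fun v => T.dist r v % (k + 1) = i).card
        ≤ Fintype.card V / (k + 1) := by
    by_contra! h
    have h1 := Finset.card_eq_sum_card_fiberwise (s := (Finset.univ : Finset V))
      (f := fun v => T.dist r v % (k + 1)) (t := Finset.range (k + 1))
      (fun v _ => by simpa using Nat.mod_lt _ (Nat.succ_pos k))
    have h2 := Finset.card_nsmul_le_sum _ _ _ (fun i hi => Nat.succ_le_of_lt (h i hi))
    rw [← h1, Finset.card_univ, Finset.card_range, smul_eq_mul] at h2
    have h3 := Nat.lt_mul_div_succ (Fintype.card V) (Nat.succ_pos k)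
    simp only [Nat.succ_eq_add_one] at h2 h3
    omega
  rw [Finset.mem_range] at hi
  refine ⟨_, hcard, fun v => ?_⟩
  suffices h : ∃ z, T.dist r z % (k + 1) = i ∧ T.dist v z ≤ k by
    obtain ⟨z, hz, hvz⟩ := h
    exact ⟨z, by simpa using hz, (hle v z).trans hvz⟩
  rcases Nat.lt_or_ge (T.dist r v) i with hv | hv
  · obtain ⟨p, hp, hps⟩ := exists_dist_eq_of_le_dist hc (show i ≤ T.dist r s by omega)
    refine ⟨p, by rw [hp]; exact Nat.mod_eq_of_lt hi, ?_⟩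
    have h1 := hmax' v s
    rcases dist_add_dist_eq_or hT hps v with h | h <;> omega
  · -- The greatest depth `i + (k + 1) * j` not exceeding that of `v`.
    have h1 := Nat.div_add_mod (T.dist r v - i) (k + 1)
    have h2 : (T.dist r v - i) % (k + 1) < k + 1 := Nat.mod_lt _ (Nat.succ_pos k)
    obtain ⟨u, hu, huv⟩ := exists_dist_eq_of_le_dist hc
      (show i + (k + 1) * ((T.dist r v - i) / (k + 1)) ≤ T.dist r v by omega)
    refine ⟨u, by rw [hu, Nat.add_mul_mod_self_left]; exact Nat.mod_eq_of_lt hi, ?_⟩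
    rw [SimpleGraph.dist_comm]
    omega
end

section
/- There is a constant C > 0 such that the following holds. For every connected finite simple graph G = (V,E), every natural number k ≥ 1, every ε > 0, every γ ∈ (0,1), every Λ > 0, and every k-covering Z ⊆ V of G with Z = |Z|, there exists a randomized algorithm A : (E → [0,Λ]) → PMF(V × V → ℝ) that is ε-differentially private with respect to neighboring edge-weight functions taking values in [0,Λ], and such that for every weight function w : E → [0,Λ], with probability at least 1 − γ over d ← A(w), simultaneously for all pairs of vertices (x,y): |d(x,y) − d_w(x,y)| ≤ C · (kΛ + Z² · ε^{−1} · log(Z/γ)). -/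
/-!
Release noisy versions of the distances between the (at most `Z²`) pairs of covering vertices and
estimate `d_w(x, y)` by the noisy value at the covering vertices assigned to `x` and `y`.

*Geometry.* Prepending and appending walks of at most `k` edges changes a distance by at most
`2kΛ` (`abs_gdistR_sub_le`), so the exact distances between covering vertices determine all
distances up to `2kΛ`.

*Privacy.* A path uses every edge at most once, so each distance changes by at most `1` between
neighboring weight functions (`abs_gdistR_sub_gdistR_le`).  Outputs of a `PMF` live on a countable
set, so the noise has to be discrete: with `N = ⌈ε⌉`, each distance `a` is rounded to `⌊N a⌋`,
which has integer sensitivity at most `N`, and independent noise on `ℤ` of mass proportional to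
`exp (-s |n|)` with `s = ε / (N n)`, `n` the number of released values, is added before dividing
by `N` (`laplace_mechanism`).  The rounding costs at most `1/N ≤ 1/ε`, and the tail bound
`P (|η| ≥ t) ≤ 2 exp (-s t)` with a union bound gives error `n ε⁻¹ log (2 n / γ)` for all values
simultaneously.

For `n = Z²` and `Z ≥ 2` both terms are `O(Z² ε⁻¹ log (Z/γ))`.  For `Z = 1` the bound vanishes as
`γ → 1`, so no noise may be added; the only distance between covering vertices is then `0`, and the
constant answer `0` has error at most `2kΛ`.
-/

open scoped ENNReal NNReal

/-- The probability that a sample from `p` lands in the set `S`. -/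
noncomputable def prob {Y : Type*} (p : PMF Y) (S : Set Y) : ℝ≥0∞ :=
  p.toOuterMeasure S

/-- `A` is `(ε,δ)`-differentially private with respect to the neighboring relation `N`. -/
def IsDP {X Y : Type*} (N : X → X → Prop) (A : X → PMF Y) (ε δ : ℝ) : Prop :=
  ∀ x x', N x x' → ∀ S : Set Y,
    prob (A x) S ≤ ENNReal.ofReal (Real.exp ε) * prob (A x') S + ENNReal.ofReal δ

/-- Two real-valued edge-weight functions are neighboring if their `ℓ1` distance
over the edges of `G` is at most `1`. -/
def NeighboringR {V : Type*} [Fintype V] [DecidableEq V] (G : SimpleGraph V)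
    [DecidableRel G.Adj] (w w' : Sym2 V → ℝ) : Prop :=
  ∑ e ∈ G.edgeFinset, |w e - w' e| ≤ 1

/-- The weight of a walk: the sum of the weights of its edges. -/
def walkWeightR {V : Type*} {G : SimpleGraph V} {x y : V} (w : Sym2 V → ℝ)
    (p : G.Walk x y) : ℝ :=
  (p.edges.map w).sum

/-- The weighted distance from `x` to `y`: the minimum weight of a path from `x` to `y`. -/
noncomputable def gdistR {V : Type*} (G : SimpleGraph V) (w : Sym2 V → ℝ) (x y : V) : ℝ :=
  ⨅ p : {p : G.Walk x y // p.IsPath}, walkWeightR w p.1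

/-- The weight function takes values in `[0, Λ]` on the edges of `G`. -/
def InRange {V : Type*} (G : SimpleGraph V) (Λ : ℝ) (w : Sym2 V → ℝ) : Prop :=
  ∀ e ∈ G.edgeSet, w e ∈ Set.Icc (0 : ℝ) Λ

/-! ### Distances and walks -/

section Distances

variable {V : Type*} {G : SimpleGraph V} {Λ : ℝ} {w w' : Sym2 V → ℝ}

lemma walkWeightR_nonneg (hw : InRange G Λ w) {x y : V} (p : G.Walk x y) :
    0 ≤ walkWeightR w p := by
  apply List.sum_nonneg
  intro a ha
  obtain ⟨e, he, rfl⟩ := List.mem_map.1 ha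
  exact (hw e (p.edges_subset_edgeSet he)).1

lemma walkWeightR_le (hw : InRange G Λ w) {x y : V} (p : G.Walk x y) :
    walkWeightR w p ≤ p.length * Λ := by
  have h := List.sum_le_card_nsmul (p.edges.map w) Λ (by
    intro a ha
    obtain ⟨e, he, rfl⟩ := List.mem_map.1 ha
    exact (hw e (p.edges_subset_edgeSet he)).2)
  simpa [walkWeightR] using h

lemma bddBelow_walkWeightR (hw : InRange G Λ w) (x y : V) :
    BddBelow (Set.range fun p : {p : G.Walk x y // p.IsPath} => walkWeightR w p.1) :=
  ⟨0, by rintro _ ⟨p, rfl⟩; exact walkWeightR_nonneg hw p.1⟩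

/-- The weighted distance is at most the weight of any walk: by nonnegativity of the weights,
shortcutting the walk to a path does not increase its weight. -/
lemma gdistR_le_walkWeightR (hw : InRange G Λ w) {x y : V} (q : G.Walk x y) :
    gdistR G w x y ≤ walkWeightR w q := by
  classical
  refine (ciInf_le (bddBelow_walkWeightR hw x y) ⟨q.bypass, q.bypass_isPath⟩).trans ?_
  obtain ⟨l, hl, hs⟩ :=
    List.Nodup.subperm q.bypass_isPath.isTrail.edges_nodup q.edges_bypass_subset_edges
  have h1 : walkWeightR w q.bypass = (l.map w).sum := ((hl.map w).sum_eq).symm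
  rw [h1]
  refine List.Sublist.sum_le_sum (hs.map w) ?_
  intro a ha
  obtain ⟨e, he, rfl⟩ := List.mem_map.1 ha
  exact (hw e (q.edges_subset_edgeSet he)).1

lemma gdistR_self (hw : InRange G Λ w) (x : V) : gdistR G w x x = 0 := by
  apply le_antisymm
  · simpa [walkWeightR] using gdistR_le_walkWeightR hw (SimpleGraph.Walk.nil : G.Walk x x)
  · exact Real.iInf_nonneg fun p => walkWeightR_nonneg hw p.1

lemma gdistR_le_add (hG : G.Connected) (hw : InRange G Λ w) {x y a b : V}
    (p : G.Walk x a) (q : G.Walk b y) :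
    gdistR G w x y ≤ walkWeightR w p + gdistR G w a b + walkWeightR w q := by
  classical
  have : Nonempty {p : G.Walk a b // p.IsPath} :=
    ⟨⟨(hG.preconnected a b).some.bypass, SimpleGraph.Walk.bypass_isPath _⟩⟩
  suffices h : gdistR G w x y - walkWeightR w p - walkWeightR w q ≤ gdistR G w a b by linarith
  refine le_ciInf fun r => ?_
  have h := gdistR_le_walkWeightR hw ((p.append r.1).append q)
  have h2 : walkWeightR w ((p.append r.1).append q)
      = walkWeightR w p + walkWeightR w r.1 + walkWeightR w q := by
    simp [walkWeightR, SimpleGraph.Walk.edges_append, add_assoc]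
  linarith

/-- Moving both endpoints by at most `k` hops changes the distance by at most `2kΛ`. -/
lemma abs_gdistR_sub_le (hG : G.Connected) (hΛ : 0 ≤ Λ) (hw : InRange G Λ w) {k : ℕ}
    {x y a b : V} (hx : G.dist x a ≤ k) (hy : G.dist y b ≤ k) :
    |gdistR G w a b - gdistR G w x y| ≤ 2 * (k * Λ) := by
  obtain ⟨p, hp⟩ := hG.exists_walk_length_eq_dist x a
  obtain ⟨q, hq⟩ := hG.exists_walk_length_eq_dist y b
  have bound : ∀ {u v : V} (r : G.Walk u v), r.length ≤ k → walkWeightR w r ≤ k * Λ := by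
    intro u v r hr
    refine (walkWeightR_le hw r).trans ?_
    have : (r.length : ℝ) ≤ k := by exact_mod_cast hr
    gcongr
  have hp1 := bound p (by omega)
  have hp2 := bound p.reverse (by simp; omega)
  have hq1 := bound q (by omega)
  have hq2 := bound q.reverse (by simp; omega)
  have h1 := gdistR_le_add hG hw p q.reverse
  have h2 := gdistR_le_add hG hw p.reverse q
  rw [abs_le]
  constructor <;> linarith

lemma gdistR_le_gdistR_add_one [Fintype V] [DecidableEq V] [DecidableRel G.Adj]
    (hG : G.Connected) (hw : InRange G Λ w)
    (h : NeighboringR G w w') (x y : V) : gdistR G w x y ≤ gdistR G w' x y + 1 := by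
  have : Nonempty {p : G.Walk x y // p.IsPath} :=
    ⟨⟨(hG.preconnected x y).some.bypass, SimpleGraph.Walk.bypass_isPath _⟩⟩
  suffices h : gdistR G w x y - 1 ≤ gdistR G w' x y by linarith
  refine le_ciInf fun p => ?_
  have h1 := gdistR_le_walkWeightR hw p.1
  -- A path has no repeated edge, so its weight is a sum over a set of edges.
  have key : ∀ u : Sym2 V → ℝ, walkWeightR u p.1 = ∑ e ∈ p.1.edges.toFinset, u e := fun u =>
    (List.sum_toFinset u p.2.isTrail.edges_nodup).symm
  have h2 : walkWeightR w p.1 - walkWeightR w' p.1 ≤ 1 := by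
    rw [key, key, ← Finset.sum_sub_distrib]
    refine le_trans (Finset.sum_le_sum fun e _ => le_abs_self _) (le_trans ?_ h)
    refine Finset.sum_le_sum_of_subset_of_nonneg ?_ fun _ _ _ => abs_nonneg _
    intro e he
    rw [SimpleGraph.mem_edgeFinset]
    exact p.1.edges_subset_edgeSet (List.mem_toFinset.1 he)
  linarith

lemma abs_gdistR_sub_gdistR_le [Fintype V] [DecidableEq V] [DecidableRel G.Adj]
    (hG : G.Connected) (hw : InRange G Λ w)
    (hw' : InRange G Λ w') (h : NeighboringR G w w') (x y : V) :
    |gdistR G w x y - gdistR G w' x y| ≤ 1 := by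
  have h' : NeighboringR G w' w := by
    unfold NeighboringR at h ⊢
    simpa only [abs_sub_comm] using h
  have h1 := gdistR_le_gdistR_add_one hG hw h x y
  have h2 := gdistR_le_gdistR_add_one hG hw' h' x y
  rw [abs_le]
  constructor <;> linarith

end Distances

/-! ### Discrete Laplace noise -/

/-- The unnormalized mass function `n ↦ exp (-s |n|)` on `ℤ`. -/
noncomputable def dlapWeight (s : ℝ) (n : ℤ) : ℝ≥0∞ :=
  ENNReal.ofReal (Real.exp (-s * |(n : ℝ)|))

lemma dlapWeight_eq_pow (s : ℝ) (n : ℤ) :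
    dlapWeight s n = ENNReal.ofReal (Real.exp (-s)) ^ n.natAbs := by
  rw [dlapWeight, ← ENNReal.ofReal_pow (Real.exp_nonneg _), ← Real.exp_nat_mul]
  congr 2
  rw [Nat.cast_natAbs, Int.cast_abs]
  ring

/-- The tail of the unnormalized weights, bounded by two geometric series. -/
lemma tsum_tail_dlapWeight_le (s : ℝ) (t : ℕ) :
    ∑' n : ℤ, {n : ℤ | t ≤ n.natAbs}.indicator (dlapWeight s) n ≤
      2 * ENNReal.ofReal (Real.exp (-s)) ^ t * ∑' j : ℕ, ENNReal.ofReal (Real.exp (-s)) ^ j := by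
  set r := ENNReal.ofReal (Real.exp (-s)) with hr
  have hpt : ∀ n : ℤ, {n : ℤ | t ≤ n.natAbs}.indicator (dlapWeight s) n ≤
      ∑' j : ℕ, ((if n = ((t + j : ℕ) : ℤ) then r ^ (t + j) else 0) +
        (if n = -((t + j : ℕ) : ℤ) then r ^ (t + j) else 0)) := by
    intro n
    by_cases hn : t ≤ n.natAbs
    · rw [Set.indicator_of_mem (s := {n : ℤ | t ≤ n.natAbs}) hn, dlapWeight_eq_pow]
      refine le_trans ?_ (ENNReal.le_tsum (n.natAbs - t))
      rw [Nat.add_sub_cancel' hn]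
      rcases Int.natAbs_eq n with h | h
      · rw [if_pos h]
        exact le_self_add
      · rw [if_pos h]
        exact le_add_self
    · rw [Set.indicator_of_notMem (s := {n : ℤ | t ≤ n.natAbs}) hn]
      exact zero_le
  refine (ENNReal.tsum_le_tsum hpt).trans ?_
  rw [ENNReal.tsum_comm]
  simp_rw [ENNReal.tsum_add, tsum_ite_eq, pow_add]
  rw [ENNReal.tsum_mul_left, two_mul, add_mul]

lemma tsum_dlapWeight_ne_zero (s : ℝ) : ∑' n : ℤ, dlapWeight s n ≠ 0 := by
  have h := ENNReal.le_tsum (f := dlapWeight s) 0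
  intro h0
  rw [h0] at h
  simp [dlapWeight] at h

lemma tsum_dlapWeight_ne_top {s : ℝ} (hs : 0 < s) : ∑' n : ℤ, dlapWeight s n ≠ ⊤ := by
  have h := tsum_tail_dlapWeight_le s 0
  simp only [zero_le, Set.ofPred_true, Set.indicator_univ, pow_zero, mul_one] at h
  refine ne_top_of_le_ne_top ?_ h
  rw [ENNReal.tsum_geometric]
  refine ENNReal.mul_ne_top (by simp) (ENNReal.inv_ne_top.2 ?_)
  rw [Ne, tsub_eq_zero_iff_le, not_le, ENNReal.ofReal_lt_one, Real.exp_lt_one_iff]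
  linarith

/-- The discrete Laplace distribution on `ℤ`, with mass proportional to `exp (-s |n|)`. -/
noncomputable def dlap {s : ℝ} (hs : 0 < s) : PMF ℤ :=
  PMF.normalize (dlapWeight s) (tsum_dlapWeight_ne_zero s) (tsum_dlapWeight_ne_top hs)

lemma dlap_add_le {s : ℝ} (hs : 0 < s) (n v : ℤ) :
    dlap hs (n + v) ≤ ENNReal.ofReal (Real.exp (s * |(v : ℝ)|)) * dlap hs n := by
  rw [dlap, PMF.normalize_apply, PMF.normalize_apply, ← mul_assoc]
  gcongr
  rw [dlapWeight, dlapWeight, ← ENNReal.ofReal_mul (Real.exp_nonneg _), ← Real.exp_add]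
  apply ENNReal.ofReal_le_ofReal
  apply Real.exp_le_exp.2
  have h : |(n : ℝ)| ≤ |((n + v : ℤ) : ℝ)| + |(v : ℝ)| := by
    have := abs_sub ((n + v : ℤ) : ℝ) (v : ℝ)
    push_cast at this ⊢
    simpa using this
  nlinarith

lemma dlap_tail_le {s : ℝ} (hs : 0 < s) (t : ℕ) :
    (dlap hs).toMeasure {n : ℤ | t ≤ n.natAbs} ≤ ENNReal.ofReal (2 * Real.exp (-s * t)) := by
  rw [PMF.toMeasure_apply _ (MeasurableSet.of_discrete)]
  have h1 : ∀ n : ℤ, {n : ℤ | t ≤ n.natAbs}.indicator (dlap hs) n =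
      {n : ℤ | t ≤ n.natAbs}.indicator (dlapWeight s) n * (∑' n, dlapWeight s n)⁻¹ := by
    intro n
    by_cases hn : n ∈ {n : ℤ | t ≤ n.natAbs}
    · rw [Set.indicator_of_mem hn, Set.indicator_of_mem hn, dlap, PMF.normalize_apply]
    · rw [Set.indicator_of_notMem hn, Set.indicator_of_notMem hn, zero_mul]
  simp_rw [h1]
  rw [ENNReal.tsum_mul_right, ← div_eq_mul_inv]
  refine ENNReal.div_le_of_le_mul ((tsum_tail_dlapWeight_le s t).trans ?_)
  have h2 : ENNReal.ofReal (2 * Real.exp (-s * t)) = 2 * ENNReal.ofReal (Real.exp (-s)) ^ t := by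
    rw [ENNReal.ofReal_mul (by norm_num), ← ENNReal.ofReal_pow (Real.exp_nonneg _),
      ← Real.exp_nat_mul]
    simp [mul_comm]
  rw [h2]
  gcongr
  -- The geometric series is the part of the normalizing constant over the nonnegative integers.
  have h3 : ∀ j : ℕ, ENNReal.ofReal (Real.exp (-s)) ^ j = dlapWeight s (j : ℤ) := by
    intro j
    rw [dlapWeight_eq_pow, Int.natAbs_natCast]
  simp_rw [h3]
  exact ENNReal.tsum_comp_le_tsum_of_injective Nat.cast_injective _

/-- Independent discrete Laplace noise in each coordinate. -/
noncomputable def dlapPi (ι : Type*) [Fintype ι] {s : ℝ} (hs : 0 < s) : PMF (ι → ℤ) :=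
  (MeasureTheory.Measure.pi fun _ : ι => (dlap hs).toMeasure).toPMF

section Noise

variable {ι : Type*} [Fintype ι] {s : ℝ} (hs : 0 < s)

lemma dlapPi_apply (η : ι → ℤ) : dlapPi ι hs η = ∏ i, dlap hs (η i) := by
  rw [dlapPi, MeasureTheory.Measure.toPMF_apply, MeasureTheory.Measure.pi_singleton]
  simp [PMF.toMeasure_apply_singleton]

lemma dlapPi_add_le {N : ℝ} (η v : ι → ℤ) (hv : ∀ i, |(v i : ℝ)| ≤ N) :
    dlapPi ι hs (η + v) ≤
      ENNReal.ofReal (Real.exp (Fintype.card ι * (s * N))) * dlapPi ι hs η := by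
  rw [dlapPi_apply, dlapPi_apply, Real.exp_nat_mul, ENNReal.ofReal_pow (Real.exp_nonneg _),
    ← Finset.card_univ, ← Finset.prod_const, ← Finset.prod_mul_distrib]
  refine Finset.prod_le_prod' fun i _ => (dlap_add_le hs (η i) (v i)).trans ?_
  gcongr
  exact hv i

lemma dlapPi_tail_le (t : ℕ) :
    prob (dlapPi ι hs) {η | ∀ i, (η i).natAbs < t}ᶜ ≤
      ENNReal.ofReal (Fintype.card ι * (2 * Real.exp (-s * t))) := by
  rw [prob, ← PMF.toMeasure_apply_eq_toOuterMeasure_apply _ (MeasurableSet.of_discrete), dlapPi,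
    MeasureTheory.Measure.toPMF_toMeasure]
  have h1 : {η : ι → ℤ | ∀ i, (η i).natAbs < t}ᶜ =
      ⋃ i, Function.eval i ⁻¹' {n : ℤ | t ≤ n.natAbs} := by
    ext η
    simp
  rw [h1]
  refine (MeasureTheory.measure_iUnion_le _).trans ?_
  rw [tsum_fintype]
  refine (Finset.sum_le_card_nsmul _ _ (ENNReal.ofReal (2 * Real.exp (-s * t))) ?_).trans ?_
  · intro i _
    rw [(MeasureTheory.measurePreserving_eval (fun _ : ι => (dlap hs).toMeasure)
      i).measure_preimage (MeasurableSet.of_discrete).nullMeasurableSet]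
    exact dlap_tail_le hs t
  · rw [nsmul_eq_mul, ENNReal.ofReal_mul (Nat.cast_nonneg _), ENNReal.ofReal_natCast,
      Finset.card_univ]

end Noise

/-! ### The mechanism -/

lemma prob_compl_add {Y : Type*} (p : PMF Y) (S : Set Y) : prob p S + prob p Sᶜ = 1 := by
  simp only [prob, PMF.toOuterMeasure_apply]
  rw [← ENNReal.tsum_add, ← p.tsum_coe]
  refine tsum_congr fun y => ?_
  exact congrFun (Set.indicator_self_add_compl S p) y

lemma prob_map {Y Y' : Type*} (p : PMF Y) (g : Y → Y') (S : Set Y') :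
    prob (p.map g) S = prob p (g ⁻¹' S) :=
  PMF.toOuterMeasure_map_apply g p S

lemma prob_mono {Y : Type*} (p : PMF Y) {S T : Set Y} (h : S ⊆ T) : prob p S ≤ prob p T :=
  p.toOuterMeasure.mono h

/-- Differential privacy is preserved under postprocessing. -/
lemma IsDP.map {X Y Y' : Type*} {R : X → X → Prop} {A : X → PMF Y} {ε δ : ℝ}
    (h : IsDP R A ε δ) (g : Y → Y') : IsDP R (fun x => (A x).map g) ε δ := by
  intro x x' hx S
  rw [prob_map, prob_map]
  exact h x x' hx _

/-- Releasing an integer vector with sensitivity at most `N` in each coordinate, with independent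
discrete Laplace noise, is `(n s N)`-differentially private, where `n` is the number of
coordinates. -/
lemma isDP_add_dlapPi {X ι : Type*} [Fintype ι] {R : X → X → Prop} (φ : X → ι → ℤ) {N s ε : ℝ}
    (hs : 0 < s) (hφ : ∀ x x', R x x' → ∀ i, |((φ x' i - φ x i : ℤ) : ℝ)| ≤ N)
    (hε : Fintype.card ι * (s * N) = ε) :
    IsDP R (fun x => (dlapPi ι hs).map (φ x + ·)) ε 0 := by
  intro x x' hx S
  rw [prob_map, prob_map, ENNReal.ofReal_zero, add_zero, prob, prob, PMF.toOuterMeasure_apply,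
    PMF.toOuterMeasure_apply, ← ENNReal.tsum_mul_left,
    ← (Equiv.addRight (φ x' - φ x)).tsum_eq]
  refine ENNReal.tsum_le_tsum fun η => ?_
  have hshift : φ x + (η + (φ x' - φ x)) = φ x' + η := by abel
  rw [Equiv.coe_addRight]
  by_cases hη : φ x' + η ∈ S
  · rw [Set.indicator_of_mem (by rwa [Set.mem_preimage, hshift]),
      Set.indicator_of_mem (by exact hη), ← hε]
    exact dlapPi_add_le hs η _ (hφ x x' hx)
  · rw [Set.indicator_of_notMem (by rwa [Set.mem_preimage, hshift])]
    exact zero_le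

lemma abs_floor_sub_floor_le {a b : ℝ} {N : ℕ} (h : |a - b| ≤ 1) :
    |((⌊N * a⌋ - ⌊N * b⌋ : ℤ) : ℝ)| ≤ N := by
  have key : ∀ {a b : ℝ}, a - b ≤ 1 → ⌊N * a⌋ - ⌊N * b⌋ ≤ (N : ℤ) := by
    intro a b h
    have : ⌊N * a⌋ ≤ ⌊N * b + N⌋ := by
      apply Int.floor_le_floor
      nlinarith [(Nat.cast_nonneg N : (0 : ℝ) ≤ N)]
    rw [Int.floor_add_natCast] at this
    omega
  have h1 := key (abs_le.1 h).2
  have h2 : ⌊N * b⌋ - ⌊N * a⌋ ≤ (N : ℤ) := key (by linarith [(abs_le.1 h).1])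
  have h3 : |⌊N * a⌋ - ⌊N * b⌋| ≤ (N : ℤ) := abs_le.2 ⟨by omega, h1⟩
  exact_mod_cast h3

/-- The Laplace mechanism with countable range: `n` real-valued queries of sensitivity `1` can be
released `ε`-privately with error `n ε⁻¹ log (2 n / γ) + ε⁻¹`, with probability `1 - γ`. -/
lemma laplace_mechanism {X ι : Type*} [Fintype ι] [Nonempty ι] {R : X → X → Prop}
    (f : X → ι → ℝ) (hf : ∀ x x', R x x' → ∀ i, |f x' i - f x i| ≤ 1) {ε γ : ℝ} (hε : 0 < ε)
    (hγ : γ ∈ Set.Ioo (0 : ℝ) 1) :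
    ∃ A : X → PMF (ι → ℝ), IsDP R A ε 0 ∧ ∀ x, ENNReal.ofReal (1 - γ) ≤
      prob (A x) {d | ∀ i, |d i - f x i| ≤
        Fintype.card ι * ε⁻¹ * Real.log (2 * Fintype.card ι / γ) + ε⁻¹} := by
  obtain ⟨hγ0, hγ1⟩ := hγ
  set n : ℝ := ((Fintype.card ι : ℕ) : ℝ) with hn
  have hn1 : 1 ≤ n := Nat.one_le_cast.2 (Fintype.card_pos : 0 < Fintype.card ι)
  have hn0 : 0 < n := by linarith
  -- The grid `ℤ / N` has mesh at most `1 / ε`.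
  set N : ℕ := ⌈ε⌉₊ with hN
  have hNε : ε ≤ N := Nat.le_ceil ε
  have hN0 : (0 : ℝ) < N := by linarith
  set s : ℝ := ε / (N * n) with hsdef
  have hs : 0 < s := by positivity
  set L : ℝ := Real.log (2 * n / γ) with hL
  have hL0 : 0 < L := Real.log_pos (by rw [lt_div_iff₀ hγ0]; linarith)
  set φ : X → ι → ℤ := fun x i => ⌊N * f x i⌋ with hφ
  refine ⟨fun x => ((dlapPi ι hs).map (φ x + ·)).map fun m i => (m i : ℝ) / N, ?_, ?_⟩
  · refine (isDP_add_dlapPi φ (N := N) hs (fun x x' h i => ?_) ?_).map _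
    · exact abs_floor_sub_floor_le (hf x x' h i)
    · rw [hsdef, ← hn]
      field_simp
  · intro x
    rw [prob_map, prob_map]
    set t : ℕ := ⌈L / s⌉₊ with ht
    have htail := dlapPi_tail_le (ι := ι) hs t
    have hbad : n * (2 * Real.exp (-s * t)) ≤ γ := by
      have h1 : L ≤ s * t := by
        have := Nat.le_ceil (L / s)
        rw [div_le_iff₀ hs] at this
        linarith
      have h2 : Real.exp (-s * t) ≤ γ / (2 * n) := by
        calc Real.exp (-s * t) ≤ Real.exp (-L) := Real.exp_le_exp.2 (by linarith)
          _ = γ / (2 * n) := by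
            rw [Real.exp_neg, hL, Real.exp_log (by positivity), inv_div]
      calc n * (2 * Real.exp (-s * t)) ≤ n * (2 * (γ / (2 * n))) := by gcongr
        _ = γ := by field_simp
    have hgood : ENNReal.ofReal (1 - γ) ≤
        prob (dlapPi ι hs) {η | ∀ i, (η i).natAbs < t} := by
      rw [ENNReal.ofReal_sub _ hγ0.le, ENNReal.ofReal_one, tsub_le_iff_right,
        ← prob_compl_add (dlapPi ι hs) {η | ∀ i, (η i).natAbs < t}]
      gcongr
      exact htail.trans (ENNReal.ofReal_le_ofReal hbad)
    refine hgood.trans (prob_mono _ ?_)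
    intro η hη i
    have hηi : |(η i : ℝ)| ≤ L / s := by
      have h1 := Nat.lt_ceil.1 (hη i)
      rw [Nat.cast_natAbs, Int.cast_abs] at h1
      exact h1.le
    have hfl1 := Int.floor_le (N * f x i)
    have hfl2 := Int.lt_floor_add_one (N * f x i)
    have hb : |((φ x i + η i : ℤ) : ℝ) - N * f x i| ≤ L / s + 1 := by
      rw [abs_le] at hηi ⊢
      push_cast
      simp only [hφ]
      constructor <;> linarith [hηi.1, hηi.2]
    have heq : (((φ x + η) i : ℤ) : ℝ) / N - f x i
        = (((φ x i + η i : ℤ) : ℝ) - N * f x i) / N := by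
      rw [Pi.add_apply]
      field_simp
    show |(((φ x + η) i : ℤ) : ℝ) / N - f x i| ≤ _
    rw [heq, abs_div, abs_of_pos hN0, div_le_iff₀ hN0]
    refine hb.trans ?_
    have h1 : L / s = n * ε⁻¹ * L * N := by
      rw [hsdef]
      field_simp
    have h2 : 1 ≤ ε⁻¹ * N := by
      rw [inv_mul_eq_div, le_div_iff₀ hε]
      linarith
    rw [h1, add_mul]
    linarith

/-- For `z ≥ 2` the error of the mechanism with `z²` queries is `O(z² ε⁻¹ log (z / γ))`. -/
lemma error_bound {z ε γ : ℝ} (hz : 2 ≤ z) (hε : 0 < ε) (hγ : γ ∈ Set.Ioo (0 : ℝ) 1) :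
    z ^ 2 * ε⁻¹ * Real.log (2 * z ^ 2 / γ) + ε⁻¹ ≤ 5 * (z ^ 2 * ε⁻¹ * Real.log (z / γ)) := by
  obtain ⟨hγ0, hγ1⟩ := hγ
  have hz0 : 0 < z := by linarith
  have hzγ : 2 ≤ z / γ := by
    rw [le_div_iff₀ hγ0]
    nlinarith
  have hlog : 1 / 2 ≤ Real.log (z / γ) := by
    have h1 := Real.log_le_log (by norm_num) hzγ
    have h2 := Real.log_two_gt_d9
    linarith
  have h3 : Real.log (2 * z ^ 2 / γ) ≤ 3 * Real.log (z / γ) := by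
    have h : (3 : ℝ) * Real.log (z / γ) = Real.log ((z / γ) ^ 3) := by
      rw [Real.log_pow]
      norm_num
    rw [h]
    apply Real.log_le_log (by positivity)
    have h4 : z ≤ z / γ := by
      rw [le_div_iff₀ hγ0]
      nlinarith
    calc 2 * z ^ 2 / γ = 2 * z * (z / γ) := by ring
      _ ≤ (z / γ) * (z / γ) * (z / γ) := by gcongr
      _ = (z / γ) ^ 3 := by ring
  have h5 : ε⁻¹ ≤ 2 * (z ^ 2 * ε⁻¹ * Real.log (z / γ)) := by
    have h6 : 1 ≤ z ^ 2 * (2 * Real.log (z / γ)) := by nlinarith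
    have := mul_le_mul_of_nonneg_left h6 (inv_pos.2 hε).le
    linarith
  have h7 : z ^ 2 * ε⁻¹ * Real.log (2 * z ^ 2 / γ) ≤ z ^ 2 * ε⁻¹ * (3 * Real.log (z / γ)) := by
    gcongr
  linarith

/-- **All-pairs distances from a `k`-covering, pure DP.**  There is a constant `C > 0`
such that for every connected graph `G`, `k ≥ 1`, `ε > 0`, `γ ∈ (0,1)`, `Λ > 0`, and every
`k`-covering `Z` of `G`, there is an `ε`-differentially private algorithm releasing
all-pairs distances with error `C · (kΛ + Z²·ε⁻¹·log(Z/γ))` with probability `1 - γ`. -/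
theorem covering_apdists_pure_dp :
    ∃ C : ℝ, 0 < C ∧
      ∀ (V : Type) [Fintype V] [DecidableEq V] (G : SimpleGraph V) [DecidableRel G.Adj],
        G.Connected →
        ∀ k : ℕ, 1 ≤ k →
        ∀ ε γ Λ : ℝ, 0 < ε → γ ∈ Set.Ioo (0 : ℝ) 1 → 0 < Λ →
        ∀ Z : Finset V, (∀ v : V, ∃ z ∈ Z, G.dist v z ≤ k) →
          ∃ A : (Sym2 V → ℝ) → PMF (V × V → ℝ),
            IsDP (fun w w' => InRange G Λ w ∧ InRange G Λ w' ∧ NeighboringR G w w') A ε 0 ∧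
            ∀ w : Sym2 V → ℝ, InRange G Λ w →
              ENNReal.ofReal (1 - γ) ≤
                prob (A w) {d | ∀ x y : V, |d (x, y) - gdistR G w x y| ≤
                  C * ((k : ℝ) * Λ + (Z.card : ℝ) ^ 2 * ε⁻¹ * Real.log ((Z.card : ℝ) / γ))} := by
  refine ⟨5, by norm_num, ?_⟩
  intro V _ _ G _ hG k _ ε γ Λ hε hγ hΛ Z hZ
  choose c hcZ hc using hZ
  have hkΛ : 0 ≤ (k : ℝ) * Λ := by positivity
  obtain ⟨v⟩ := hG.nonempty
  have hpos : 0 < Z.card := Finset.card_pos.2 ⟨c v, hcZ v⟩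
  rcases Nat.lt_or_ge 1 Z.card with hcard | hcard
  · have hne : Nonempty Z := ⟨⟨c v, hcZ v⟩⟩
    obtain ⟨A, hA, hacc⟩ := laplace_mechanism
      (R := fun w w' => InRange G Λ w ∧ InRange G Λ w' ∧ NeighboringR G w w')
      (f := fun (w : Sym2 V → ℝ) (i : Z × Z) => gdistR G w i.1 i.2)
      (fun w w' h i => by
        rw [abs_sub_comm]
        exact abs_gdistR_sub_gdistR_le hG h.1 h.2.1 h.2.2 _ _) hε hγ
    let g : (Z × Z → ℝ) → V × V → ℝ := fun d q => d (⟨c q.1, hcZ q.1⟩, ⟨c q.2, hcZ q.2⟩)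
    refine ⟨fun w => (A w).map g, IsDP.map hA g, fun w hw => ?_⟩
    rw [prob_map]
    refine (hacc w).trans (prob_mono _ ?_)
    intro d hd x y
    have h1 := hd (⟨c x, hcZ x⟩, ⟨c y, hcZ y⟩)
    have h2 := abs_gdistR_sub_le hG hΛ.le hw (hc x) (hc y)
    have h3 := error_bound (z := Z.card) (by exact_mod_cast hcard) hε hγ
    have hn : ((Fintype.card (Z × Z) : ℕ) : ℝ) = (Z.card : ℝ) ^ 2 := by
      rw [Fintype.card_prod, Fintype.card_coe]
      push_cast
      ring
    rw [hn] at h1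
    have h4 := abs_sub_le (d (⟨c x, hcZ x⟩, ⟨c y, hcZ y⟩)) (gdistR G w (c x) (c y))
      (gdistR G w x y)
    refine h4.trans ?_
    rw [mul_add]
    linarith
  · refine ⟨fun _ => PMF.pure fun _ => 0, ?_, fun w hw => ?_⟩
    · intro w w' _ S
      rw [ENNReal.ofReal_zero, add_zero]
      refine le_mul_of_one_le_left zero_le ?_
      rw [ENNReal.one_le_ofReal]
      exact Real.one_le_exp hε.le
    · have hmem : (fun _ => (0 : ℝ) : V × V → ℝ) ∈ {d : V × V → ℝ | ∀ x y : V,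
          |d (x, y) - gdistR G w x y| ≤
            5 * ((k : ℝ) * Λ + (Z.card : ℝ) ^ 2 * ε⁻¹ * Real.log ((Z.card : ℝ) / γ))} := by
        intro x y
        have hxy : c x = c y := Finset.card_le_one.1 hcard _ (hcZ x) _ (hcZ y)
        have h2 := abs_gdistR_sub_le hG hΛ.le hw (hc x) (hc y)
        rw [hxy, gdistR_self hw] at h2
        have hZ1 : (1 : ℝ) ≤ Z.card := by exact_mod_cast hpos
        have hlog : 0 ≤ Real.log ((Z.card : ℝ) / γ) := by
          apply Real.log_nonneg
          rw [le_div_iff₀ hγ.1]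
          linarith [hγ.2]
        have h3 : 0 ≤ (Z.card : ℝ) ^ 2 * ε⁻¹ * Real.log ((Z.card : ℝ) / γ) := by positivity
        refine h2.trans ?_
        linarith
      rw [prob, PMF.toOuterMeasure_pure_apply, if_pos hmem, ENNReal.ofReal_le_one]
      linarith [hγ.1]
end

section
/- Fix n ≥ 1, ε ≥ 0, and δ ≥ 0. For every randomized algorithm A : (Fin n × {0,1} → ℝ≥0) → PMF({0,1}^n) that is (ε,δ)-differentially private with respect to ℓ1-neighboring weight functions, there exists a weight function w : Fin n × {0,1} → {0,1} such that the expected approximation error of the path released by A satisfies E_{y ← A(w)}[P_w(y)] − min_{z ∈ {0,1}^n} P_w(z) ≥ n · (1 − (1+e^ε)δ) / (1 + e^{2ε}). -/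
/-!
The `2 ^ n` weight functions `hardWeight x`, for `x : Fin n → Bool`, give weight `0` to the edges
of path `x` and weight `1` to all others, so that the error of path `y` is its Hamming distance to
`x`. An algorithm of small error must therefore reveal each bit `x i` with high probability.

Privacy forbids this. If `x'` is `x` with bit `i` flipped, then `hardWeight x` and `hardWeight x'`
are both neighbors of the weight function obtained by setting both edges at position `i` to `0`.
Two applications of privacy (`IsDP.toReal_le`) bound the probability that `y i ≠ x i` under `x'` by
`e^(2ε)` times its probability under `x`, plus `(1 + e^ε) δ`. As `y i ≠ x i` is the complement of
`y i ≠ x' i`, the error probabilities `p` and `p'` at position `i` satisfy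
`1 - (1 + e^ε) δ ≤ e^(2ε) p + p'` (`errProb_flip`).
Summing over all `x` and all `i` shows that the average of the expected error over `x` meets the
claimed bound, and hence so does the expected error for some `x`.
-/

open scoped ENNReal NNReal

/-- The expected value of `f` under the distribution `p` (finite output space). -/
noncomputable def expVal {Y : Type*} [Fintype Y] (p : PMF Y) (f : Y → ℝ) : ℝ :=
  ∑ y, (p y).toReal * f y

/-- Two weight functions on the edges of the lower-bound graph are neighboring if their
`ℓ1` distance is at most `1`. -/
def L1NeighborNN {ι : Type*} [Fintype ι] (w w' : ι → ℝ≥0) : Prop :=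
  ∑ i, |(w i : ℝ) - (w' i : ℝ)| ≤ 1

/-- The weight of the `s`–`t` path encoded by `y : Fin n → Bool` in the lower-bound graph:
path `y` uses edge `e_i^{(y_i)}` between vertices `i-1` and `i`. -/
def Pw {n : ℕ} (w : Fin n × Bool → ℝ≥0) (y : Fin n → Bool) : ℝ :=
  ∑ i, (w (i, y i) : ℝ)

lemma prob_toReal {Y : Type*} [Fintype Y] (p : PMF Y) (P : Y → Prop)
    [DecidablePred P] :
    (prob p {y | P y}).toReal = ∑ y, (p y).toReal * (if P y then 1 else 0) := by
  rw [prob, PMF.toOuterMeasure_apply_fintype, ENNReal.toReal_sum]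
  · refine Finset.sum_congr rfl fun y _ => ?_
    by_cases h : P y <;> simp [h]
  · intro y _
    by_cases h : P y <;> simp [h, p.apply_ne_top]

lemma prob_ne_top {Y : Type*} [Fintype Y] (p : PMF Y) (S : Set Y) : prob p S ≠ ⊤ := by
  rw [prob, PMF.toOuterMeasure_apply_fintype]
  refine ENNReal.sum_ne_top.2 fun y _ => ?_
  by_cases h : y ∈ S <;> simp [h, p.apply_ne_top]

lemma sum_toReal {Y : Type*} [Fintype Y] (p : PMF Y) : ∑ y, (p y).toReal = 1 := by
  rw [← ENNReal.toReal_sum fun y _ => p.apply_ne_top y, ← tsum_fintype (L := .unconditional _),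
    p.tsum_coe, ENNReal.toReal_one]

/-- Differential privacy as an inequality between real numbers. -/
lemma IsDP.toReal_le {X Y : Type*} [Fintype Y] {N : X → X → Prop} {A : X → PMF Y} {ε δ : ℝ}
    (h : IsDP N A ε δ) (hδ : 0 ≤ δ) {x x' : X} (hx : N x x') (S : Set Y) :
    (prob (A x) S).toReal ≤ Real.exp ε * (prob (A x') S).toReal + δ := by
  have hm : ENNReal.ofReal (Real.exp ε) * prob (A x') S ≠ ⊤ :=
    ENNReal.mul_ne_top ENNReal.ofReal_ne_top (prob_ne_top _ _)
  have := ENNReal.toReal_mono (ENNReal.add_ne_top.2 ⟨hm, ENNReal.ofReal_ne_top⟩) (h x x' hx S)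
  rwa [ENNReal.toReal_add hm ENNReal.ofReal_ne_top, ENNReal.toReal_mul,
    ENNReal.toReal_ofReal (Real.exp_pos ε).le, ENNReal.toReal_ofReal hδ] at this

/-- The weight function under which path `x` is free and every edge off `x` has weight `1`. -/
def hardWeight {n : ℕ} (x : Fin n → Bool) (p : Fin n × Bool) : ℝ≥0 :=
  if p.2 = x p.1 then 0 else 1

/-- `hardWeight x` with both edges at position `i` given weight `0`. It does not depend on `x i`. -/
def midWeight {n : ℕ} (x : Fin n → Bool) (i : Fin n) (p : Fin n × Bool) : ℝ≥0 :=
  if p.1 = i then 0 else hardWeight x p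

/-- The bit string `x` with its `i`-th bit flipped. -/
def flipBit {n : ℕ} (i : Fin n) (x : Fin n → Bool) : Fin n → Bool :=
  Function.update x i (!x i)

lemma flipBit_involutive {n : ℕ} (i : Fin n) : Function.Involutive (flipBit i) := by
  intro x
  simp [flipBit]

lemma midWeight_flipBit {n : ℕ} (x : Fin n → Bool) (i : Fin n) :
    midWeight (flipBit i x) i = midWeight x i := by
  ext p
  by_cases h : p.1 = i <;> simp [midWeight, hardWeight, flipBit, h]

lemma hardWeight_midWeight {n : ℕ} (x : Fin n → Bool) (i : Fin n) :
    L1NeighborNN (hardWeight x) (midWeight x i) := by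
  have h : ∀ p : Fin n × Bool, |(hardWeight x p : ℝ) - (midWeight x i p : ℝ)| =
      if p = (i, !x i) then 1 else 0 := by
    rintro ⟨j, b⟩
    by_cases hj : j = i
    · subst hj
      cases b <;> cases hx : x j <;> simp [hardWeight, midWeight, hx]
    · simp [midWeight, hj]
  simp [L1NeighborNN, h]

lemma midWeight_hardWeight {n : ℕ} (x : Fin n → Bool) (i : Fin n) :
    L1NeighborNN (midWeight x i) (hardWeight x) := by
  have h := hardWeight_midWeight x i
  simp only [L1NeighborNN] at h ⊢
  simpa only [abs_sub_comm] using h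

/-- The probability that the path released on input `hardWeight x` disagrees with `x` at
position `i`. -/
noncomputable def errProb {n : ℕ} (A : (Fin n × Bool → ℝ≥0) → PMF (Fin n → Bool))
    (x : Fin n → Bool) (i : Fin n) : ℝ :=
  (prob (A (hardWeight x)) {y | y i ≠ x i}).toReal

/-- The inequality between the error probabilities at position `i` for two inputs that differ in
bit `i`, obtained from privacy by passing through the common neighbor `midWeight x i`. -/
lemma errProb_flip {n : ℕ} {ε δ : ℝ} (hδ : 0 ≤ δ)
    {A : (Fin n × Bool → ℝ≥0) → PMF (Fin n → Bool)} (hDP : IsDP L1NeighborNN A ε δ)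
    (x : Fin n → Bool) (i : Fin n) :
    1 - (1 + Real.exp ε) * δ ≤
      Real.exp (2 * ε) * errProb A x i + errProb A (flipBit i x) i := by
  have h1 := hDP.toReal_le hδ (midWeight_hardWeight x i) {y | y i ≠ x i}
  have h2 := hDP.toReal_le hδ (hardWeight_midWeight (flipBit i x) i) {y | y i ≠ x i}
  rw [midWeight_flipBit] at h2
  have h3 : (prob (A (hardWeight (flipBit i x))) {y | y i ≠ x i}).toReal +
      errProb A (flipBit i x) i = 1 := by
    rw [errProb, prob_toReal, prob_toReal, ← Finset.sum_add_distrib]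
    refine (Finset.sum_congr rfl fun y _ => ?_).trans (sum_toReal (A (hardWeight (flipBit i x))))
    cases hy : y i <;> cases hx : x i <;> simp [flipBit, hx]
  have h4 := mul_le_mul_of_nonneg_left h1 (Real.exp_pos ε).le
  have h5 : Real.exp (2 * ε) = Real.exp ε * Real.exp ε := by rw [two_mul, Real.exp_add]
  rw [h5]
  change _ ≤ _ * (_ * errProb A x i + δ) at h4
  linarith

/-- On `hardWeight x` the expected weight of the released path is its expected Hamming distance
to `x`. -/
lemma expVal_hardWeight {n : ℕ} (A : (Fin n × Bool → ℝ≥0) → PMF (Fin n → Bool))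
    (x : Fin n → Bool) :
    expVal (A (hardWeight x)) (Pw (hardWeight x)) = ∑ i, errProb A x i := by
  simp only [expVal, Pw, errProb, prob_toReal, Finset.mul_sum]
  rw [Finset.sum_comm]
  refine Finset.sum_congr rfl fun i _ => Finset.sum_congr rfl fun y _ => ?_
  by_cases h : y i = x i <;> simp [hardWeight, h]

lemma iInf_Pw_hardWeight_le {n : ℕ} (x : Fin n → Bool) :
    ⨅ z : Fin n → Bool, Pw (hardWeight x) z ≤ 0 := by
  refine (ciInf_le (Set.finite_range _).bddBelow x).trans ?_
  simp [Pw, hardWeight]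

/-- The average of `errProb A x i` over all `x` is at least `(1 - (1 + e^ε) δ) / (1 + e^(2ε))`. -/
lemma sum_errProb {n : ℕ} {ε δ : ℝ} (hδ : 0 ≤ δ)
    {A : (Fin n × Bool → ℝ≥0) → PMF (Fin n → Bool)} (hDP : IsDP L1NeighborNN A ε δ)
    (i : Fin n) :
    ∑ _x : Fin n → Bool, (1 - (1 + Real.exp ε) * δ) / (1 + Real.exp (2 * ε)) ≤
      ∑ x, errProb A x i := by
  have h := Finset.sum_le_sum fun x (_ : x ∈ Finset.univ) => errProb_flip hδ hDP x i
  have hflip : ∑ x, errProb A (flipBit i x) i = ∑ x, errProb A x i :=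
    Equiv.sum_comp (flipBit_involutive i).toPerm fun x => errProb A x i
  rw [Finset.sum_add_distrib, ← Finset.mul_sum, hflip] at h
  rw [← Finset.sum_div, div_le_iff₀ (by positivity)]
  linarith

/-- **Lower bound for private shortest paths.**  Any `(ε,δ)`-differentially private algorithm
releasing an `s`–`t` path in the lower-bound graph has, on some `{0,1}`-valued weight
function, expected approximation error at least `n·(1-(1+e^ε)δ)/(1+e^{2ε})`. -/
theorem shortest_path_lower_bound (n : ℕ) (hn : 1 ≤ n) (ε δ : ℝ) (hε : 0 ≤ ε) (hδ : 0 ≤ δ)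
    (A : (Fin n × Bool → ℝ≥0) → PMF (Fin n → Bool))
    (hDP : IsDP L1NeighborNN A ε δ) :
    ∃ w : Fin n × Bool → ℝ≥0, (∀ p, w p = 0 ∨ w p = 1) ∧
      (n : ℝ) * (1 - (1 + Real.exp ε) * δ) / (1 + Real.exp (2 * ε)) ≤
        expVal (A w) (Pw w) - ⨅ z : Fin n → Bool, Pw w z := by
  have havg : ∑ _x : Fin n → Bool,
      ((n : ℝ) * (1 - (1 + Real.exp ε) * δ) / (1 + Real.exp (2 * ε))) ≤
        ∑ x, ∑ i, errProb A x i := by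
    have h := Finset.sum_le_sum fun i (_ : i ∈ Finset.univ) => sum_errProb hδ hDP i
    rw [Finset.sum_comm, Finset.sum_comm (f := fun i x => errProb A x i)] at h
    simpa [mul_div_assoc] using h
  obtain ⟨x, -, hx⟩ := Finset.exists_le_of_sum_le Finset.univ_nonempty havg
  refine ⟨hardWeight x, fun p => ?_, ?_⟩
  · unfold hardWeight
    split_ifs <;> simp
  · rw [expVal_hardWeight]
    linarith [iInf_Pw_hardWeight_le x]
end

section
/- Fix n ≥ 1, ε ≥ 0, δ ≥ 0, and α ≥ 0. Let A : (Fin n × {0,1} → ℝ≥0) → PMF({0,1}^n) be a randomized algorithm that is (ε,δ)-differentially private with respect to ℓ1-neighboring weight functions and such that for every weight function w : Fin n × {0,1} → {0,1}, the expected approximation error of the released path satisfies E_{y ← A(w)}[P_w(y)] − min_{z ∈ {0,1}^n} P_w(z) ≤ α. Then there exists a randomized algorithm B : {0,1}^n → PMF({0,1}^n) that is (2ε, (1+e^ε)δ)-differentially private with respect to Hamming-neighboring inputs and such that for every x ∈ {0,1}^n, the expected Hamming distance satisfies E_{y ← B(x)}[d_H(x,y)] ≤ α. -/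
/-!
Encode a string `x` as the weight function giving weight `0` to the edges of path `x` and weight `1`
to all others, and let `B x = A (encodeW x)`. The weight of path `y` is then the Hamming distance
`d_H(x, y)`, and the minimum path weight is `0`, so the error bound for `A` is the distance bound
for `B`. For strings differing in one coordinate the encodings are at `ℓ1` distance `2`, and their
midpoint is at distance `1` from each; applying the privacy of `A` twice through the midpoint
gives `(2ε, (1+e^ε)δ)`-privacy of `B`.
-/

open scoped ENNReal NNReal

/-- Two bit strings are Hamming-neighboring if they differ in exactly one coordinate. -/
def HammingNeighbor {n : ℕ} (x y : Fin n → Bool) : Prop :=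
  hammingDist x y = 1

/-- The `{0,1}`-valued weight function encoding the string `x`: at each position the edge
agreeing with `x` is free and the other edge costs `1`. -/
noncomputable def encodeW {n : ℕ} (x : Fin n → Bool) (p : Fin n × Bool) : ℝ≥0 :=
  if x p.1 = p.2 then 0 else 1

lemma Pw_encodeW {n : ℕ} (x y : Fin n → Bool) :
    Pw (encodeW x) y = (hammingDist x y : ℝ) := by
  simp only [Pw, encodeW, hammingDist, Finset.card_filter]
  push_cast
  refine Finset.sum_congr rfl fun i _ => ?_
  by_cases h : x i = y i <;> simp [h]

/-- The pointwise midpoint of the encodings of `x` and `y`. -/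
noncomputable def midW {n : ℕ} (x y : Fin n → Bool) (p : Fin n × Bool) : ℝ≥0 :=
  (encodeW x p + encodeW y p) / 2

lemma midW_comm {n : ℕ} (x y : Fin n → Bool) : midW x y = midW y x := by
  funext p
  simp only [midW, add_comm]

/-- Where `x` and `y` differ, both parallel edges move by `1/2` from `encodeW x` to the midpoint,
so the `ℓ1` distance to the midpoint is exactly the Hamming distance. -/
lemma sum_abs_encodeW_sub_midW {n : ℕ} (x y : Fin n → Bool) :
    ∑ p, |(encodeW x p : ℝ) - (midW x y p : ℝ)| = (hammingDist x y : ℝ) := by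
  rw [Fintype.sum_prod_type]
  simp only [midW, encodeW, hammingDist, Finset.card_filter, Fintype.sum_bool]
  push_cast
  refine Finset.sum_congr rfl fun i _ => ?_
  cases x i <;> cases y i <;> norm_num [abs_of_nonneg, abs_of_neg]

lemma l1Neighbor_encodeW_midW {n : ℕ} {x y : Fin n → Bool} (h : HammingNeighbor x y) :
    L1NeighborNN (encodeW x) (midW x y) := by
  unfold L1NeighborNN
  rw [sum_abs_encodeW_sub_midW, show hammingDist x y = 1 from h, Nat.cast_one]

lemma l1Neighbor_midW_encodeW {n : ℕ} {x y : Fin n → Bool} (h : HammingNeighbor x y) :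
    L1NeighborNN (midW x y) (encodeW y) := by
  have h' : HammingNeighbor y x := (hammingDist_comm y x).trans h
  have := l1Neighbor_encodeW_midW h'
  rw [midW_comm y x] at this
  unfold L1NeighborNN at this ⊢
  simpa only [abs_sub_comm] using this

/-- **Reduction from reconstruction to private shortest paths.**  If an `(ε,δ)`-differentially
private algorithm releases `s`–`t` paths in the lower-bound graph with expected approximation
error at most `α` on every `{0,1}`-valued weight function, then there is a
`(2ε, (1+e^ε)δ)`-differentially private algorithm `B` on `{0,1}^n` with expected Hamming
distance `E[d_H(x, B(x))] ≤ α` for every input `x`. -/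
theorem shortest_path_reduction (n : ℕ) (hn : 1 ≤ n) (ε δ α : ℝ)
    (hε : 0 ≤ ε) (hδ : 0 ≤ δ) (hα : 0 ≤ α)
    (A : (Fin n × Bool → ℝ≥0) → PMF (Fin n → Bool))
    (hDP : IsDP L1NeighborNN A ε δ)
    (hAcc : ∀ w : Fin n × Bool → ℝ≥0, (∀ p, w p = 0 ∨ w p = 1) →
      expVal (A w) (Pw w) - ⨅ z : Fin n → Bool, Pw w z ≤ α) :
    ∃ B : (Fin n → Bool) → PMF (Fin n → Bool),
      IsDP (fun x y => HammingNeighbor x y) B (2 * ε) ((1 + Real.exp ε) * δ) ∧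
      ∀ x : Fin n → Bool, expVal (B x) (fun y => (hammingDist x y : ℝ)) ≤ α := by
  refine ⟨fun x => A (encodeW x), ?_, fun x => ?_⟩
  · intro x y hxy S
    have h1 := hDP _ _ (l1Neighbor_encodeW_midW hxy) S
    have h2 := hDP _ _ (l1Neighbor_midW_encodeW hxy) S
    have he : 0 ≤ Real.exp ε := (Real.exp_pos ε).le
    calc prob (A (encodeW x)) S
        ≤ ENNReal.ofReal (Real.exp ε) * prob (A (midW x y)) S + ENNReal.ofReal δ := h1
      _ ≤ ENNReal.ofReal (Real.exp ε) *
            (ENNReal.ofReal (Real.exp ε) * prob (A (encodeW y)) S + ENNReal.ofReal δ)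
            + ENNReal.ofReal δ := by gcongr
      _ = ENNReal.ofReal (Real.exp (2 * ε)) * prob (A (encodeW y)) S
            + ENNReal.ofReal ((1 + Real.exp ε) * δ) := by
          rw [two_mul, Real.exp_add, ENNReal.ofReal_mul he,
            ENNReal.ofReal_mul (add_nonneg zero_le_one he),
            ENNReal.ofReal_add zero_le_one he, ENNReal.ofReal_one]
          ring
  · have hA := hAcc (encodeW x) fun p => by
      unfold encodeW
      split_ifs <;> simp
    -- The path `x` itself has weight `0`, so the minimum path weight is nonpositive.
    have hmin : ⨅ z : Fin n → Bool, Pw (encodeW x) z ≤ 0 := by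
      refine (ciInf_le (Set.finite_range _).bddBelow x).trans ?_
      simp [Pw_encodeW]
    rw [funext (Pw_encodeW x)] at hA
    rw [funext (Pw_encodeW x)] at hmin
    linarith
end

section
/- For every connected finite simple graph G = (V,E) with E = |E| edges, every ε > 0, and every γ ∈ (0,1), there exists a randomized algorithm A : (E → ℝ≥0) → PMF(Π_{(s,t) ∈ V×V} {paths of G from s to t}) (releasing, for every pair of vertices, a path of G between them) that is ε-differentially private with respect to ℓ1-neighboring edge-weight functions, and such that for every weight function w : E → ℝ≥0, with probability at least 1 − γ over the released family P: for every pair of vertices s,t and every path Q of G from s to t, w(P(s,t)) ≤ w(Q) + (2·hl(Q)/ε)·log(E/γ), where hl(Q) is the number of edges of Q. In particular, if there exists a k-hop path of weight W from s to t, the released path from s to t has weight at most W + (2k/ε)·log(E/γ). -/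
/-!
The mechanism adds independent Laplace noise of scale `1 / ε` to every edge weight, shifts
all of them upwards by `M = log (E / γ) / ε`, and releases, for each pair of vertices, a path
minimising the total noisy weight.

*Privacy.* Moving the centre of a Laplace distribution by `d` changes its density by a factor of
at most `exp (ε * d)`; over all edges these factors multiply to `exp (ε * ‖w - w'‖₁) ≤ exp ε`
(`lap_le`, `pi_le_prod_mul`). The released paths are a function of the noisy weights
alone, so the bound is inherited by the output.

*Utility.* A Laplace variable has absolute value above `M` with probability
`exp (-ε * M) = γ / E`, so by a union bound all `E` noises lie in `[-M, M]` with probability at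
least `1 - γ`. The shifted noisy weights then lie between `w` and `w + 2 * M`, whence
`w(P) ≤ noisy(P) ≤ noisy(Q) ≤ w(Q) + 2 * M * hl(Q)`; the shift is what keeps the hop length of the
released path out of the bound.
-/

open scoped ENNReal NNReal

/-- Two `ℝ≥0`-valued edge-weight functions are neighboring if their `ℓ1` distance
over the edges of `G` is at most `1`. -/
def NeighboringNN {V : Type*} [Fintype V] [DecidableEq V] (G : SimpleGraph V)
    [DecidableRel G.Adj] (w w' : Sym2 V → ℝ≥0) : Prop :=
  ∑ e ∈ G.edgeFinset, |(w e : ℝ) - (w' e : ℝ)| ≤ 1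

/-- The weight of a walk: the sum of the weights of its edges. -/
def walkWeightNN {V : Type*} {G : SimpleGraph V} {x y : V} (w : Sym2 V → ℝ≥0)
    (p : G.Walk x y) : ℝ :=
  (p.edges.map (fun e => (w e : ℝ))).sum

/-- The weighted distance from `x` to `y`: the minimum weight of a path from `x` to `y`. -/
noncomputable def gdistNN {V : Type*} (G : SimpleGraph V) (w : Sym2 V → ℝ≥0) (x y : V) : ℝ :=
  ⨅ p : {p : G.Walk x y // p.IsPath}, walkWeightNN w p.1


open MeasureTheory

/-- The Laplace distribution of scale `1 / ε` centred at `m`. -/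
noncomputable def lap (ε m : ℝ) : Measure ℝ :=
  volume.withDensity fun x => ENNReal.ofReal (ε / 2 * Real.exp (-ε * |x - m|))

lemma lap_tail {ε : ℝ} (hε : 0 < ε) (m : ℝ) {t : ℝ} (ht : 0 ≤ t) :
    lap ε m {x | t < |x - m|} = ENNReal.ofReal (Real.exp (-ε * t)) := by
  set h : ℝ → ℝ := (Set.Ioi t).indicator fun x => ε / 2 * Real.exp (-ε * x) with hh
  have hset : MeasurableSet {x : ℝ | t < |x - m|} := measurableSet_lt (by fun_prop) (by fun_prop)
  have hint : ∫ y, h |y| = Real.exp (-ε * t) := by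
    rw [integral_comp_abs, hh, setIntegral_indicator measurableSet_Ioi, Set.Ioi_inter_Ioi,
      max_eq_right ht, integral_const_mul, integral_exp_mul_Ioi (by linarith)]
    field_simp
  -- A nonzero Bochner integral already certifies integrability.
  have hI : Integrable fun y => h |y| :=
    Integrable.of_integral_ne_zero (by rw [hint]; exact (Real.exp_pos _).ne')
  have h0 : ∀ y, 0 ≤ h y := fun y => Set.indicator_nonneg (fun _ _ => by positivity) y
  rw [lap, withDensity_apply _ hset, ← lintegral_indicator hset, ← hint,
    ofReal_integral_eq_lintegral_ofReal hI (Filter.Eventually.of_forall fun y => h0 _),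
    ← lintegral_sub_right_eq_self (fun y => ENNReal.ofReal (h |y|)) m]
  refine lintegral_congr fun x => ?_
  by_cases hx : t < |x - m| <;> simp [hh, hx]

lemma lap_isProbabilityMeasure {ε : ℝ} (hε : 0 < ε) (m : ℝ) :
    IsProbabilityMeasure (lap ε m) := by
  refine ⟨?_⟩
  have h1 := lap_tail hε m le_rfl
  have h2 : lap ε m {m} = 0 := withDensity_absolutelyContinuous _ _ (by simp)
  have h3 : {x : ℝ | 0 < |x - m|} = {m}ᶜ := by
    ext x
    simp [sub_eq_zero]
  rw [h3] at h1
  have h4 := measure_add_measure_compl (μ := lap ε m) (measurableSet_singleton m)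
  rw [← h4, h2, h1]
  simp

lemma lap_le {ε : ℝ} (hε : 0 < ε) (m m' : ℝ) (s : Set ℝ) :
    lap ε m s ≤ ENNReal.ofReal (Real.exp (ε * |m - m'|)) * lap ε m' s := by
  have : lap ε m ≤ ENNReal.ofReal (Real.exp (ε * |m - m'|)) • lap ε m' := by
    rw [lap, lap, ← withDensity_smul _ (by fun_prop)]
    refine withDensity_mono (Filter.Eventually.of_forall fun x => ?_)
    simp only [Pi.smul_apply, smul_eq_mul]
    rw [← ENNReal.ofReal_mul (Real.exp_pos _).le]
    refine ENNReal.ofReal_le_ofReal ?_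
    rw [mul_left_comm, ← Real.exp_add]
    have := abs_sub_le x m m'
    gcongr
    nlinarith
  exact this s

/-- A bound between measures factor by factor gives a bound between the product measures. -/
lemma pi_le_prod_mul {ι : Type*} [Fintype ι] (μ ν : ι → Measure ℝ) [∀ i, SigmaFinite (μ i)]
    [∀ i, SigmaFinite (ν i)] (d : ι → ℝ≥0∞) (hd0 : ∀ i, d i ≠ 0) (hd : ∀ i, d i ≠ ⊤)
    (h : ∀ i s, μ i s ≤ d i * ν i s) (s : Set (ι → ℝ)) :
    Measure.pi μ s ≤ (∏ i, d i) * Measure.pi ν s := by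
  have hc0 : ∏ i, d i ≠ 0 := Finset.prod_ne_zero_iff.2 fun i _ => hd0 i
  have hc : ∏ i, d i ≠ ⊤ := ENNReal.prod_ne_top fun i _ => hd i
  have key : (∏ i, d i)⁻¹ • (Measure.pi μ).toOuterMeasure ≤
      OuterMeasure.pi fun i => (ν i).toOuterMeasure := by
    rw [OuterMeasure.le_pi]
    intro t _
    have : Measure.pi μ (Set.univ.pi t) ≤ (∏ i, d i) * ∏ i, ν i (t i) := by
      rw [Measure.pi_pi, ← Finset.prod_mul_distrib]
      exact Finset.prod_le_prod' fun i _ => h i _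
    calc (∏ i, d i)⁻¹ * Measure.pi μ (Set.univ.pi t)
        ≤ (∏ i, d i)⁻¹ * ((∏ i, d i) * ∏ i, ν i (t i)) := by gcongr
      _ = ∏ i, ν i (t i) := by rw [← mul_assoc, ENNReal.inv_mul_cancel hc0 hc, one_mul]
  have h2 : (∏ i, d i)⁻¹ * Measure.pi μ s ≤ Measure.pi ν s := by
    refine (key s).trans ?_
    rw [Measure.pi]
    exact le_toMeasure_apply _ _ _
  calc Measure.pi μ s = (∏ i, d i) * ((∏ i, d i)⁻¹ * Measure.pi μ s) := by
        rw [← mul_assoc, ENNReal.mul_inv_cancel hc0 hc, one_mul]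
    _ ≤ _ := by gcongr

/-- The total weight of a walk for real, possibly negative, edge weights. -/
def cost {V : Type*} {G : SimpleGraph V} {s t : V} (x : Sym2 V → ℝ) (p : G.Walk s t) : ℝ :=
  (p.edges.map x).sum

@[fun_prop]
lemma measurable_cost {V : Type*} {G : SimpleGraph V} {s t : V} (p : G.Walk s t) :
    Measurable fun x : Sym2 V → ℝ => cost x p := by
  unfold cost
  induction p.edges with
  | nil => simp
  | cons e l ih =>
    simp only [List.map_cons, List.sum_cons]
    exact (measurable_pi_apply e).add ih

/-- Lightest paths can be selected measurably in the edge weights: as there are finitely many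
families of paths, the first one in a fixed enumeration that is optimal will do. -/
lemma exists_measurable_selection {V : Type*} [Fintype V] [DecidableEq V]
    (G : SimpleGraph V) [DecidableRel G.Adj] (hG : G.Connected) :
    ∃ F : (Sym2 V → ℝ) → (∀ s t : V, {p : G.Walk s t // p.IsPath}),
      Measurable[_, ⊤] F ∧
      ∀ x s t (Q : G.Walk s t), Q.IsPath → cost x (F x s t).1 ≤ cost x Q := by
  classical
  have hfin : ∀ s t : V, Finite {p : G.Walk s t // p.IsPath} := fun s t =>
    inferInstanceAs (Finite (G.Path s t))
  have hne : ∀ s t : V, Nonempty {p : G.Walk s t // p.IsPath} := fun s t =>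
    let ⟨p, hp⟩ := hG.exists_isPath s t
    ⟨⟨p, hp⟩⟩
  obtain ⟨f, hf⟩ := exists_surjective_nat (∀ s t : V, {p : G.Walk s t // p.IsPath})
  let good : (Sym2 V → ℝ) → ℕ → Prop := fun x n =>
    ∀ s t (Q : {p : G.Walk s t // p.IsPath}), cost x (f n s t).1 ≤ cost x Q.1
  have hgood : ∀ x, ∃ n, good x n := by
    intro x
    have : ∀ s t : V, ∃ P : {p : G.Walk s t // p.IsPath},
        ∀ Q : {p : G.Walk s t // p.IsPath}, cost x P.1 ≤ cost x Q.1 := fun s t =>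
      Finite.exists_min fun P : {p : G.Walk s t // p.IsPath} => cost x P.1
    choose P hP using this
    obtain ⟨n, hn⟩ := hf P
    exact ⟨n, fun s t Q => by rw [hn]; exact hP s t Q⟩
  refine ⟨fun x => f (Nat.find (hgood x)), ?_, fun x s t Q hQ =>
    Nat.find_spec (hgood x) s t ⟨Q, hQ⟩⟩
  refine (measurable_from_nat (f := f)).comp (measurable_find hgood fun n => ?_)
  simp only [good, Set.ofPred_forall]
  exact .iInter fun s => .iInter fun t => .iInter fun Q =>
    measurableSet_le (by fun_prop) (by fun_prop)

/-- Here `x` stands for the noisy weights shifted upwards by `M`. If every edge noise is at most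
`M` in absolute value, a walk `P` at least as light as `Q` for `x` is, for the true weights, at most
`2 * M` per edge of `Q` heavier than `Q`. -/
lemma weight_le_of_noise_le {V : Type*} {G : SimpleGraph V} {s t : V} (w : Sym2 V → ℝ≥0)
    (x : Sym2 V → ℝ) (M : ℝ) (h : ∀ e ∈ G.edgeSet, |x e - (w e + M)| ≤ M) (P Q : G.Walk s t)
    (hPQ : cost x P ≤ cost x Q) :
    walkWeightNN w P ≤ walkWeightNN w Q + 2 * M * Q.length := by
  have h1 : walkWeightNN w P ≤ cost x P := by
    refine List.sum_le_sum fun e he => ?_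
    linarith [(abs_le.1 (h e (P.edges_subset_edgeSet he))).1]
  have h2 : cost x Q ≤ (Q.edges.map fun e => (w e : ℝ) + 2 * M).sum := by
    refine List.sum_le_sum fun e he => ?_
    linarith [(abs_le.1 (h e (Q.edges_subset_edgeSet he))).2]
  rw [List.sum_map_add] at h2
  simp only [List.map_const', List.sum_replicate, SimpleGraph.Walk.length_edges,
    nsmul_eq_mul] at h2
  unfold walkWeightNN at *
  linarith

/-- **Private shortest paths, hop-length bound.**  For every connected graph `G`, `ε > 0` and
`γ ∈ (0,1)`, there is an `ε`-differentially private algorithm releasing a path between every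
pair of vertices such that with probability `1 - γ`, for all `s, t` and every path `Q` from
`s` to `t`, the released path has weight at most `w(Q) + (2·hl(Q)/ε)·log(E/γ)`. -/
theorem private_shortest_paths_hop {V : Type*} [Fintype V] [DecidableEq V]
    (G : SimpleGraph V) [DecidableRel G.Adj] (hG : G.Connected)
    (ε γ : ℝ) (hε : 0 < ε) (hγ : γ ∈ Set.Ioo (0 : ℝ) 1) :
    ∃ A : (Sym2 V → ℝ≥0) → PMF (∀ s t : V, {p : G.Walk s t // p.IsPath}),
      IsDP (NeighboringNN G) A ε 0 ∧
      ∀ w : Sym2 V → ℝ≥0,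
        ENNReal.ofReal (1 - γ) ≤
          prob (A w) {P | ∀ (s t : V) (Q : G.Walk s t), Q.IsPath →
            walkWeightNN w (P s t).1 ≤
              walkWeightNN w Q +
                (2 * (Q.length : ℝ) / ε) * Real.log ((G.edgeFinset.card : ℝ) / γ)} := by
  classical
  obtain ⟨hγ0, hγ1⟩ := hγ
  obtain ⟨F, hF, hopt⟩ := exists_measurable_selection G hG
  set M : ℝ := Real.log ((G.edgeFinset.card : ℝ) / γ) / ε with hM
  -- Weights of non-edges are ignored, since neighbouring weights may differ arbitrarily there.
  let c : (Sym2 V → ℝ≥0) → Sym2 V → ℝ := fun w e => if e ∈ G.edgeFinset then w e + M else 0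
  let μ : (Sym2 V → ℝ≥0) → Measure (Sym2 V → ℝ) := fun w => Measure.pi fun e => lap ε (c w e)
  have hlap : ∀ m, IsProbabilityMeasure (lap ε m) := lap_isProbabilityMeasure hε
  let _ : MeasurableSpace (∀ s t : V, {p : G.Walk s t // p.IsPath}) := ⊤
  have hfin : ∀ s t : V, Finite {p : G.Walk s t // p.IsPath} := fun s t =>
    inferInstanceAs (Finite (G.Path s t))
  have hprob : ∀ w, IsProbabilityMeasure ((μ w).map F) := fun w =>
    Measure.isProbabilityMeasure_map hF.aemeasurable
  have hA : ∀ w S, prob ((μ w).map F).toPMF S = μ w (F ⁻¹' S) := by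
    intro w S
    rw [prob, ← PMF.toMeasure_apply_eq_toOuterMeasure, Measure.toPMF_toMeasure,
      Measure.map_apply hF trivial]
  refine ⟨fun w => ((μ w).map F).toPMF, ?_, ?_⟩
  · intro w w' hw S
    rw [hA, hA, ENNReal.ofReal_zero, add_zero]
    refine (pi_le_prod_mul _ _ _ (fun e => (ENNReal.ofReal_pos.2 (Real.exp_pos _)).ne')
      (fun e => ENNReal.ofReal_ne_top) (fun e s => lap_le hε (c w e) (c w' e) s)
      _).trans ?_
    gcongr
    rw [← ENNReal.ofReal_prod_of_nonneg fun _ _ => (Real.exp_pos _).le, ← Real.exp_sum,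
      ← Finset.mul_sum]
    refine ENNReal.ofReal_le_ofReal (Real.exp_le_exp.2 ?_)
    have : ∑ e, |c w e - c w' e| = ∑ e ∈ G.edgeFinset, |(w e : ℝ) - (w' e : ℝ)| := by
      rw [← Finset.sum_subset (Finset.subset_univ G.edgeFinset)]
      · exact Finset.sum_congr rfl fun e he => by simp only [c, if_pos he]; congr 1; ring
      · intro e _ he
        simp only [c, if_neg he, sub_self, abs_zero]
    rw [this]
    exact mul_le_of_le_one_right hε.le hw
  · intro w
    rw [hA]
    let bad : Sym2 V → Set (Sym2 V → ℝ) := fun e => {x | M < |x e - c w e|}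
    have hbadm : ∀ e, MeasurableSet (bad e) := fun e =>
      measurableSet_lt (by fun_prop) (by fun_prop)
    have hbad : ∀ e ∈ G.edgeFinset,
        μ w (bad e) = ENNReal.ofReal (γ / G.edgeFinset.card) := by
      intro e he
      have hE : (1 : ℝ) ≤ G.edgeFinset.card := by
        exact_mod_cast Finset.card_pos.2 ⟨e, he⟩
      have hM0 : 0 ≤ M :=
        div_nonneg (Real.log_nonneg ((one_le_div hγ0).2 (by linarith))) hε.le
      have h1 : μ w (bad e) = lap ε (c w e) {y | M < |y - c w e|} :=
        (measurePreserving_eval (fun e => lap ε (c w e)) e).measure_preimage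
          (s := {y | M < |y - c w e|})
          (measurableSet_lt (by fun_prop) (by fun_prop)).nullMeasurableSet
      rw [h1, lap_tail hε _ hM0, hM, neg_mul, mul_div_cancel₀ _ hε.ne', Real.exp_neg,
        Real.exp_log (by positivity), inv_div]
    have hunion : μ w (⋃ e ∈ G.edgeFinset, bad e) ≤ ENNReal.ofReal γ := by
      refine (measure_biUnion_finset_le _ _).trans ?_
      rw [Finset.sum_congr rfl hbad, Finset.sum_const, nsmul_eq_mul, ← ENNReal.ofReal_natCast,
        ← ENNReal.ofReal_mul (Nat.cast_nonneg _)]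
      refine ENNReal.ofReal_le_ofReal ?_
      -- Without edges the product is zero by the convention `γ / 0 = 0`.
      rcases eq_or_ne (G.edgeFinset.card : ℝ) 0 with h | h
      · simp [h, hγ0.le]
      · rw [mul_div_cancel₀ _ h]
    have hcompl : ENNReal.ofReal (1 - γ) ≤ μ w (⋃ e ∈ G.edgeFinset, bad e)ᶜ := by
      rw [prob_compl_eq_one_sub (Finset.measurableSet_biUnion _ fun e _ => hbadm e),
        ENNReal.ofReal_sub _ hγ0.le, ENNReal.ofReal_one]
      gcongr
    refine hcompl.trans (measure_mono fun x hx s t Q hQ => ?_)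
    have hx' : ∀ e ∈ G.edgeSet, |x e - (w e + M)| ≤ M := by
      intro e he
      have he' : e ∈ G.edgeFinset := SimpleGraph.mem_edgeFinset.2 he
      by_contra! hlt
      exact hx (Set.mem_biUnion he' (by simpa only [bad, c, if_pos he', Set.mem_ofPred_eq]))
    refine (weight_le_of_noise_le w x M hx' _ Q (hopt x s t Q hQ)).trans_eq ?_
    rw [hM]
    ring
end

section
/- For every connected finite simple graph G = (V,E) with V = |V| vertices and E = |E| edges, every ε > 0, and every γ ∈ (0,1), there exists a randomized algorithm A : (E → ℝ≥0) → PMF(Π_{(s,t) ∈ V×V} {paths of G from s to t}) that is ε-differentially private with respect to ℓ1-neighboring edge-weight functions, and such that for every weight function w : E → ℝ≥0, with probability at least 1 − γ over the released family P: for every pair of vertices s,t, the approximation error satisfies w(P(s,t)) − d_w(s,t) ≤ (2V/ε)·log(E/γ). -/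
/-!
Perturb the weight of every edge of `G` by independent Laplace noise of scale `1 / ε` and release,
for every pair of vertices, a path that is shortest for the noisy weights.

* Privacy: the densities of two Laplace laws centred at `m` and `m'` differ by a factor at most
  `exp (ε |m - m'|)` (`laplace_le`). The product laws of neighboring weights therefore differ by a
  factor at most `exp ε` (`pi_le_smul_pi`), and the released family is a measurable function of the
  noisy weights.
* Accuracy: with `t = log (E / γ) / ε`, a Laplace variable deviates from its centre by more than `t`
  with probability at most `γ / E` (`laplace_tail`), so by a union bound all edge weights are
  `t`-accurate with probability at least `1 - γ`. A path has fewer than `V` edges, so its noisy and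
  true weights then differ by at most `V t`; comparing the released path with a shortest one costs
  twice that, which is `(2 V / ε) log (E / γ)`.

The noisy weights may be negative. This is harmless because the minimum is taken over the finitely
many simple paths between two vertices.
-/

open scoped ENNReal NNReal

open MeasureTheory

/-! ### The Laplace distribution -/

/-- The Laplace law on `ℝ` with centre `m` and scale `1 / ε`. -/
noncomputable def laplace (ε m : ℝ) : Measure ℝ :=
  volume.withDensity fun x => ENNReal.ofReal (ε / 2 * Real.exp (-ε * |x - m|))

theorem laplace_Ioi {ε : ℝ} (hε : 0 < ε) (m : ℝ) {t : ℝ} (ht : 0 ≤ t) :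
    laplace ε m (Set.Ioi (m + t)) = ENNReal.ofReal (Real.exp (-ε * t) / 2) := by
  have hcongr : ∀ x ∈ Set.Ioi (m + t), ENNReal.ofReal (ε / 2 * Real.exp (-ε * |x - m|)) =
      ENNReal.ofReal (ε / 2 * Real.exp (ε * m) * Real.exp (-ε * x)) := by
    intro x hx
    have hx' : m + t < x := hx
    rw [abs_of_nonneg (by linarith), mul_assoc, ← Real.exp_add]
    ring_nf
  rw [laplace, withDensity_apply _ measurableSet_Ioi,
    setLIntegral_congr_fun measurableSet_Ioi hcongr, ← ofReal_integral_eq_lintegral_ofReal]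
  · congr 1
    rw [integral_const_mul, integral_exp_mul_Ioi (by linarith : -ε < 0)]
    have : Real.exp (-ε * (m + t)) = Real.exp (-ε * t) * (Real.exp (ε * m))⁻¹ := by
      rw [← Real.exp_neg, ← Real.exp_add]; ring_nf
    rw [this]
    field_simp
  · exact (integrableOn_exp_mul_Ioi (by linarith : -ε < 0) _).const_mul _
  · exact Filter.Eventually.of_forall fun x => by positivity

theorem laplace_Iic {ε : ℝ} (hε : 0 < ε) (m : ℝ) {t : ℝ} (ht : 0 ≤ t) :
    laplace ε m (Set.Iic (m - t)) = ENNReal.ofReal (Real.exp (-ε * t) / 2) := by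
  have hcongr : ∀ x ∈ Set.Iic (m - t), ENNReal.ofReal (ε / 2 * Real.exp (-ε * |x - m|)) =
      ENNReal.ofReal (ε / 2 * Real.exp (-ε * m) * Real.exp (ε * x)) := by
    intro x hx
    have hx' : x ≤ m - t := hx
    rw [abs_of_nonpos (by linarith), mul_assoc, ← Real.exp_add]
    ring_nf
  rw [laplace, withDensity_apply _ measurableSet_Iic,
    setLIntegral_congr_fun measurableSet_Iic hcongr, ← ofReal_integral_eq_lintegral_ofReal]
  · congr 1
    rw [integral_const_mul, integral_exp_mul_Iic hε]
    have : Real.exp (ε * (m - t)) = Real.exp (-ε * t) * (Real.exp (-ε * m))⁻¹ := by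
      rw [← Real.exp_neg, ← Real.exp_add]; ring_nf
    rw [this]
    field_simp
  · exact (integrableOn_exp_mul_Iic hε _).const_mul _
  · exact Filter.Eventually.of_forall fun x => by positivity

theorem laplace_union {ε : ℝ} (hε : 0 < ε) (m : ℝ) {t : ℝ} (ht : 0 ≤ t) :
    laplace ε m (Set.Iic (m - t) ∪ Set.Ioi (m + t)) = ENNReal.ofReal (Real.exp (-ε * t)) := by
  rw [measure_union _ measurableSet_Ioi, laplace_Ioi hε m ht, laplace_Iic hε m ht,
    ← ENNReal.ofReal_add (by positivity) (by positivity), add_halves]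
  rw [Set.disjoint_left]
  intro x hx hx'
  simp only [Set.mem_Iic, Set.mem_Ioi] at hx hx'
  linarith

theorem laplace_tail {ε : ℝ} (hε : 0 < ε) (m : ℝ) {t : ℝ} (ht : 0 ≤ t) :
    laplace ε m {x | t < |x - m|} ≤ ENNReal.ofReal (Real.exp (-ε * t)) := by
  rw [← laplace_union hε m ht]
  refine measure_mono fun x hx => ?_
  rcases lt_abs.1 (show t < |x - m| from hx) with h | h
  · exact Or.inr (show m + t < x by linarith)
  · exact Or.inl (show x ≤ m - t by linarith)

theorem isProbabilityMeasure_laplace {ε : ℝ} (hε : 0 < ε) (m : ℝ) :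
    IsProbabilityMeasure (laplace ε m) := by
  constructor
  have := laplace_union hε m le_rfl
  simpa using this

/-- Moving the centre changes the Laplace law by a bounded factor, by the triangle inequality in
the exponent of the density. -/
theorem laplace_le {ε : ℝ} (hε : 0 < ε) (m m' : ℝ) :
    laplace ε m ≤ ENNReal.ofReal (Real.exp (ε * |m - m'|)) • laplace ε m' := by
  rw [laplace, laplace, ← withDensity_smul' _ _ ENNReal.ofReal_ne_top]
  refine withDensity_mono (Filter.Eventually.of_forall fun x => ?_)
  rw [Pi.smul_apply, smul_eq_mul, ← ENNReal.ofReal_mul (by positivity)]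
  refine ENNReal.ofReal_le_ofReal ?_
  rw [mul_left_comm, ← Real.exp_add]
  have h : |x - m'| ≤ |m - m'| + |x - m| := by
    have := abs_sub_le x m m'
    linarith
  gcongr
  nlinarith

/-! ### Comparison of product measures -/

theorem pi_le_smul_pi {ι α : Type*} [Fintype ι] [MeasurableSpace α] (μ ν : ι → Measure α)
    [∀ i, SigmaFinite (μ i)] [∀ i, SigmaFinite (ν i)] (c : ι → ℝ≥0∞) (hc0 : ∀ i, c i ≠ 0)
    (hc : ∀ i, c i ≠ ⊤) (h : ∀ i, μ i ≤ c i • ν i) :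
    Measure.pi μ ≤ (∏ i, c i) • Measure.pi ν := by
  have hC0 : (∏ i, c i) ≠ 0 := Finset.prod_ne_zero_iff.2 fun i _ => hc0 i
  have hC : (∏ i, c i) ≠ ⊤ := ENNReal.prod_ne_top fun i _ => hc i
  -- `Measure.pi ν` is the largest outer measure with the prescribed bound on boxes.
  have key : ((∏ i, c i)⁻¹ • Measure.pi μ).toOuterMeasure ≤
      OuterMeasure.pi fun i => (ν i).toOuterMeasure := by
    rw [OuterMeasure.le_pi]
    intro s _
    change (∏ i, c i)⁻¹ * Measure.pi μ (Set.pi Set.univ s) ≤ ∏ i, ν i (s i)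
    rw [Measure.pi_pi, mul_comm, ← div_eq_mul_inv]
    refine ENNReal.div_le_of_le_mul ?_
    rw [mul_comm, ← Finset.prod_mul_distrib]
    exact Finset.prod_le_prod' fun i _ => h i (s i)
  refine Measure.le_iff.2 fun S hS => ?_
  have h1 : (∏ i, c i)⁻¹ * Measure.pi μ S ≤ Measure.pi ν S := by
    rw [Measure.pi_def ν, toMeasure_apply _ _ hS]
    exact key S
  calc Measure.pi μ S = (∏ i, c i) * ((∏ i, c i)⁻¹ * Measure.pi μ S) := by
        rw [← mul_assoc, ENNReal.mul_inv_cancel hC0 hC, one_mul]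
    _ ≤ (∏ i, c i) * Measure.pi ν S := by gcongr

/-! ### Noisy weights and noisy shortest paths -/

section Mechanism

set_option linter.unusedSectionVars false

variable {V : Type*} [Fintype V] [DecidableEq V] (G : SimpleGraph V) [DecidableRel G.Adj]

/-- The weight function `w` on the edges of `G`, extended by zero to all of `Sym2 V`. -/
def edgeWeight (w : Sym2 V → ℝ≥0) (e : Sym2 V) : ℝ :=
  if e ∈ G.edgeFinset then (w e : ℝ) else 0

/-- The law of the noisy weights. Noise is added on all of `Sym2 V`, centred at `0` off the edges of
`G`, so that the coordinates outside `G` carry no information. -/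
noncomputable def noisyWeights (ε : ℝ) (w : Sym2 V → ℝ≥0) : Measure (Sym2 V → ℝ) :=
  Measure.pi fun e => laplace ε (edgeWeight G w e)

/-- The weight of a walk under real, possibly negative, edge weights. -/
def realWeight {x y : V} (z : Sym2 V → ℝ) (p : G.Walk x y) : ℝ :=
  (p.edges.map z).sum

theorem isProbabilityMeasure_noisyWeights {ε : ℝ} (hε : 0 < ε) (w : Sym2 V → ℝ≥0) :
    IsProbabilityMeasure (noisyWeights G ε w) := by
  have := fun e => isProbabilityMeasure_laplace hε (edgeWeight G w e)
  unfold noisyWeights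
  infer_instance

theorem noisyWeights_le {ε : ℝ} (hε : 0 < ε) {w w' : Sym2 V → ℝ≥0}
    (h : NeighboringNN G w w') (S : Set (Sym2 V → ℝ)) :
    noisyWeights G ε w S ≤ ENNReal.ofReal (Real.exp ε) * noisyWeights G ε w' S := by
  have i1 := fun e => isProbabilityMeasure_laplace hε (edgeWeight G w e)
  have i2 := fun e => isProbabilityMeasure_laplace hε (edgeWeight G w' e)
  have h1 := pi_le_smul_pi (fun e => laplace ε (edgeWeight G w e))
    (fun e => laplace ε (edgeWeight G w' e))
    (fun e => ENNReal.ofReal (Real.exp (ε * |edgeWeight G w e - edgeWeight G w' e|)))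
    (fun e => (ENNReal.ofReal_pos.2 (Real.exp_pos _)).ne') (fun e => ENNReal.ofReal_ne_top)
    (fun e => laplace_le hε _ _) S
  refine h1.trans ?_
  rw [Measure.smul_apply, smul_eq_mul]
  refine mul_le_mul_left ?_ _
  rw [← ENNReal.ofReal_prod_of_nonneg fun _ _ => (Real.exp_pos _).le, ← Real.exp_sum,
    ← Finset.mul_sum]
  refine ENNReal.ofReal_le_ofReal (Real.exp_le_exp.2 ?_)
  have h2 : ∑ e, |edgeWeight G w e - edgeWeight G w' e| =
      ∑ e ∈ G.edgeFinset, |(w e : ℝ) - (w' e : ℝ)| := by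
    rw [← Finset.sum_subset (Finset.subset_univ G.edgeFinset)]
    · exact Finset.sum_congr rfl fun e he => by simp only [edgeWeight, if_pos he]
    · intro e _ he
      simp only [edgeWeight, if_neg he, sub_zero, abs_zero]
  rw [h2]
  have h3 : ∑ e ∈ G.edgeFinset, |(w e : ℝ) - (w' e : ℝ)| ≤ 1 := h
  nlinarith

/-- The families of paths all of whose members are shortest for the weights `z`. -/
def optimalFamilies (z : Sym2 V → ℝ) : Set (∀ s t : V, {p : G.Walk s t // p.IsPath}) :=
  {P | ∀ s t : V, ∀ q : {p : G.Walk s t // p.IsPath}, realWeight G z (P s t).1 ≤ realWeight G z q.1}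

theorem finite_path (s t : V) : Finite {p : G.Walk s t // p.IsPath} :=
  inferInstanceAs (Finite (G.Path s t))

theorem nonempty_path {G : SimpleGraph V} (hG : G.Connected) (s t : V) :
    Nonempty {p : G.Walk s t // p.IsPath} := by
  obtain ⟨p⟩ := hG.preconnected s t
  exact ⟨p.toPath⟩

theorem optimalFamilies_nonempty (hG : G.Connected) (z : Sym2 V → ℝ) :
    (optimalFamilies G z).Nonempty := by
  have key : ∀ s t : V, ∃ p : {p : G.Walk s t // p.IsPath},
      ∀ q : {p : G.Walk s t // p.IsPath}, realWeight G z p.1 ≤ realWeight G z q.1 := by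
    intro s t
    have := finite_path G s t
    have := nonempty_path hG s t
    exact Finite.exists_min fun p : {p : G.Walk s t // p.IsPath} => realWeight G z p.1
  choose P hP using key
  exact ⟨P, hP⟩

theorem measurable_realWeight {x y : V} (p : G.Walk x y) :
    Measurable fun z : Sym2 V → ℝ => realWeight G z p := by
  unfold realWeight
  induction p.edges with
  | nil => simp
  | cons e l ih =>
    simp only [List.map_cons, List.sum_cons]
    exact (measurable_pi_apply e).add ih

/-- Choosing an optimal family depends on `z` only through the set of optimal families. That set
takes finitely many values and is measurable in `z`, so every choice function yields a measurable
selection. -/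
theorem exists_measurable_selection_s13 (hG : G.Connected) :
    ∃ f : (Sym2 V → ℝ) → ∀ s t : V, {p : G.Walk s t // p.IsPath},
      (∀ z, f z ∈ optimalFamilies G z) ∧ ∀ S, MeasurableSet (f ⁻¹' S) := by
  classical
  have hfin := finite_path G
  obtain ⟨P₀, -⟩ := optimalFamilies_nonempty G hG 0
  let g : Set (∀ s t : V, {p : G.Walk s t // p.IsPath}) →
      ∀ s t : V, {p : G.Walk s t // p.IsPath} := fun M => if h : M.Nonempty then h.some else P₀
  refine ⟨fun z => g (optimalFamilies G z), fun z => ?_, fun S => ?_⟩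
  · simp only [g, dif_pos (optimalFamilies_nonempty G hG z)]
    exact (optimalFamilies_nonempty G hG z).some_mem
  · have hM : Measurable fun z => optimalFamilies G z := by
      refine measurable_set_iff.2 fun P => measurableSet_setOfPred.1 ?_
      have heq : {z | P ∈ optimalFamilies G z} = ⋂ s : V, ⋂ t : V,
          ⋂ q : {p : G.Walk s t // p.IsPath},
            {z | realWeight G z (P s t).1 ≤ realWeight G z q.1} := by
        ext z
        simp [optimalFamilies]
      rw [heq]
      exact MeasurableSet.iInter fun s => MeasurableSet.iInter fun t => MeasurableSet.iInter fun q =>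
        measurableSet_le (measurable_realWeight G _) (measurable_realWeight G _)
    exact hM (Set.toFinite (g ⁻¹' S)).measurableSet

/-! ### Accuracy -/

theorem abs_realWeight_sub_le {w : Sym2 V → ℝ≥0} {z : Sym2 V → ℝ} {t : ℝ} (ht : 0 ≤ t)
    (hz : ∀ e ∈ G.edgeFinset, |z e - w e| ≤ t) {x y : V} (p : G.Walk x y) (hp : p.IsPath) :
    |realWeight G z p - walkWeightNN w p| ≤ Fintype.card V * t := by
  have key : ∀ l : List (Sym2 V), (∀ e ∈ l, e ∈ G.edgeFinset) →
      |(l.map z).sum - (l.map fun e => (w e : ℝ)).sum| ≤ l.length * t := by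
    intro l
    induction l with
    | nil => simp
    | cons e l ih =>
      intro hl
      have h1 := ih fun e' he' => hl e' (List.mem_cons_of_mem _ he')
      have h2 := hz e (hl e List.mem_cons_self)
      simp only [List.map_cons, List.sum_cons, List.length_cons, Nat.cast_add, Nat.cast_one]
      rw [abs_le] at *
      constructor <;> linarith
  refine (key p.edges fun e he => SimpleGraph.mem_edgeFinset.2 (p.edges_subset_edgeSet he)).trans ?_
  rw [SimpleGraph.Walk.length_edges]
  have : (p.length : ℝ) ≤ Fintype.card V := by exact_mod_cast hp.length_lt.le
  gcongr

theorem error_le (hG : G.Connected) {w : Sym2 V → ℝ≥0} {z : Sym2 V → ℝ} {t : ℝ} (ht : 0 ≤ t)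
    (hz : ∀ e ∈ G.edgeFinset, |z e - w e| ≤ t)
    {P : ∀ s t : V, {p : G.Walk s t // p.IsPath}} (hP : P ∈ optimalFamilies G z) (x y : V) :
    walkWeightNN w (P x y).1 - gdistNN G w x y ≤ 2 * (Fintype.card V * t) := by
  have := nonempty_path hG x y
  have h : walkWeightNN w (P x y).1 - 2 * (Fintype.card V * t) ≤ gdistNN G w x y := by
    refine le_ciInf fun q => ?_
    have h1 := abs_le.1 (abs_realWeight_sub_le G ht hz _ (P x y).2)
    have h2 := abs_le.1 (abs_realWeight_sub_le G ht hz _ q.2)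
    have h3 := hP x y q
    linarith
  linarith

theorem noisyWeights_bad_le {ε : ℝ} (hε : 0 < ε) (w : Sym2 V → ℝ≥0) {t : ℝ} (ht : 0 ≤ t) :
    noisyWeights G ε w {z | ∀ e ∈ G.edgeFinset, |z e - w e| ≤ t}ᶜ ≤
      G.edgeFinset.card * ENNReal.ofReal (Real.exp (-ε * t)) := by
  have inst := fun e => isProbabilityMeasure_laplace hε (edgeWeight G w e)
  have hsub : {z : Sym2 V → ℝ | ∀ e ∈ G.edgeFinset, |z e - w e| ≤ t}ᶜ ⊆
      ⋃ e ∈ G.edgeFinset, Function.eval e ⁻¹' {x : ℝ | t < |x - edgeWeight G w e|} := by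
    intro z hz
    simp only [Set.mem_compl_iff, Set.mem_ofPred_eq, not_forall, not_le] at hz
    obtain ⟨e, he, hlt⟩ := hz
    refine Set.mem_iUnion₂.2 ⟨e, he, ?_⟩
    simpa only [Set.mem_preimage, Set.mem_ofPred_eq, edgeWeight, if_pos he] using hlt
  refine (measure_mono hsub).trans ((measure_biUnion_finset_le _ _).trans ?_)
  rw [← nsmul_eq_mul]
  refine Finset.sum_le_card_nsmul _ _ _ fun e _ => ?_
  have hms : MeasurableSet {x : ℝ | t < |x - edgeWeight G w e|} :=
    measurableSet_lt measurable_const (by fun_prop)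
  rw [noisyWeights, (measurePreserving_eval (fun e => laplace ε (edgeWeight G w e)) e).measure_preimage
    hms.nullMeasurableSet]
  exact laplace_tail hε _ ht

end Mechanism

/-- **Private shortest paths, global bound.**  For every connected graph `G`, `ε > 0` and
`γ ∈ (0,1)`, there is an `ε`-differentially private algorithm releasing a path between every
pair of vertices such that with probability `1 - γ`, for all `s, t` the released path has
approximation error at most `(2V/ε)·log(E/γ)`. -/
theorem private_shortest_paths_global {V : Type*} [Fintype V] [DecidableEq V]
    (G : SimpleGraph V) [DecidableRel G.Adj] (hG : G.Connected)
    (ε γ : ℝ) (hε : 0 < ε) (hγ : γ ∈ Set.Ioo (0 : ℝ) 1) :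
    ∃ A : (Sym2 V → ℝ≥0) → PMF (∀ s t : V, {p : G.Walk s t // p.IsPath}),
      IsDP (NeighboringNN G) A ε 0 ∧
      ∀ w : Sym2 V → ℝ≥0,
        ENNReal.ofReal (1 - γ) ≤
          prob (A w) {P | ∀ s t : V,
            walkWeightNN w (P s t).1 - gdistNN G w s t ≤
              (2 * (Fintype.card V : ℝ) / ε) * Real.log ((G.edgeFinset.card : ℝ) / γ)} := by
  classical
  obtain ⟨hγ0, hγ1⟩ := hγ
  have hfin := finite_path G
  let _ : MeasurableSpace (∀ s t : V, {p : G.Walk s t // p.IsPath}) := ⊤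
  obtain ⟨f, hf, hfS⟩ := exists_measurable_selection_s13 G hG
  have hfm : Measurable f := fun S _ => hfS S
  have hprob := fun w => isProbabilityMeasure_noisyWeights G hε w
  have hmap := fun w => Measure.isProbabilityMeasure_map (μ := noisyWeights G ε w) hfm.aemeasurable
  have happ : ∀ w S, prob ((noisyWeights G ε w).map f).toPMF S = noisyWeights G ε w (f ⁻¹' S) := by
    intro w S
    rw [prob, ← PMF.toMeasure_apply_eq_toOuterMeasure_apply _ MeasurableSpace.measurableSet_top, Measure.toPMF_toMeasure,
      Measure.map_apply hfm MeasurableSpace.measurableSet_top]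
  refine ⟨fun w => ((noisyWeights G ε w).map f).toPMF, fun w w' hN S => ?_, fun w => ?_⟩
  · rw [happ, happ, ENNReal.ofReal_zero, add_zero]
    exact noisyWeights_le G hε hN _
  · rw [happ]
    set t : ℝ := Real.log ((G.edgeFinset.card : ℝ) / γ) / ε with ht_def
    -- For a graph without edges `t = log 0 / ε = 0` and there is nothing to bound; otherwise
    -- `E / γ > 1` and the union bound adds up to exactly `γ`.
    have ht : 0 ≤ t ∧ G.edgeFinset.card * ENNReal.ofReal (Real.exp (-ε * t)) ≤
        ENNReal.ofReal γ := by
      rcases Nat.eq_zero_or_pos G.edgeFinset.card with h0 | hpos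
      · simp [ht_def, h0]
      · have hE : (1 : ℝ) ≤ G.edgeFinset.card := by exact_mod_cast hpos
        have h1 : 1 ≤ (G.edgeFinset.card : ℝ) / γ := by
          rw [le_div_iff₀ hγ0]
          linarith
        refine ⟨div_nonneg (Real.log_nonneg h1) hε.le, ?_⟩
        have h2 : Real.exp (-ε * t) = γ / G.edgeFinset.card := by
          rw [ht_def, neg_mul, mul_div_cancel₀ _ hε.ne', Real.exp_neg,
            Real.exp_log (by linarith), inv_div]
        rw [h2, ← ENNReal.ofReal_natCast, ← ENNReal.ofReal_mul (by positivity),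
          mul_div_cancel₀ _ (by linarith)]
    have hgood : MeasurableSet {z : Sym2 V → ℝ | ∀ e ∈ G.edgeFinset, |z e - w e| ≤ t} := by
      simp only [Set.ofPred_forall]
      exact MeasurableSet.iInter fun e => MeasurableSet.iInter fun _ =>
        measurableSet_le (by fun_prop) measurable_const
    have hle : ENNReal.ofReal (1 - γ) ≤
        noisyWeights G ε w {z : Sym2 V → ℝ | ∀ e ∈ G.edgeFinset, |z e - w e| ≤ t} := by
      have h1 := (noisyWeights_bad_le G hε w ht.1).trans ht.2
      have h2 := prob_add_prob_compl (μ := noisyWeights G ε w) hgood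
      rw [ENNReal.ofReal_sub _ hγ0.le, ENNReal.ofReal_one, tsub_le_iff_right, ← h2]
      gcongr
    refine hle.trans (measure_mono fun z hz x y => ?_)
    refine (error_le G hG ht.1 hz (hf z) x y).trans (le_of_eq ?_)
    rw [ht_def]
    ring
end

section
/- For every connected finite simple graph G = (V,E) with V = |V| vertices and E = |E| edges, every ε > 0, and every γ ∈ (0,1), there exists a randomized algorithm A : (E → ℝ) → PMF({spanning trees of G}) that is ε-differentially private with respect to ℓ1-neighboring edge-weight functions, and such that for every weight function w : E → ℝ, with probability at least 1 − γ over the released spanning tree T: w(T) ≤ w(T*) + (2(V−1)/ε)·log(E/γ), where T* is a minimum-weight spanning tree of (G,w) and w(T) denotes the sum of the weights of the edges of T. -/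
/-!
The algorithm is the exponential mechanism: release the spanning tree `T` with probability
proportional to `exp (-(ε / 2) * w(T))`.

* Privacy: each `w(T)` moves by at most `1` between neighboring weight functions, so each unnormalized
  density and the normalizing constant both change by a factor of at most `exp (ε / 2)`
  (`prob_gibbs_le`).
* Utility: a tree whose weight exceeds the minimum by more than `t` has probability at most
  `exp (-(ε / 2) * t)`, so by a union bound the failure probability is at most `N * exp (-(ε / 2) * t)`,
  where `N` is the number of spanning trees (`le_prob_gibbs`). A spanning tree is a set of
  `V - 1` edges, so `N ≤ E ^ (V - 1)` (`card_spanningTree_le`); with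
  `t = (2 (V - 1) / ε) log (E / γ)` the bound becomes `γ ^ (V - 1) ≤ γ` as soon as `V ≥ 2`.
  For `V = 1` the empty set is the only spanning tree.
-/

open scoped ENNReal NNReal

/-- `T` is a spanning tree of `G`: a set of edges of `G` forming a connected acyclic
spanning subgraph. -/
def IsSpanningTree {V : Type*} (G : SimpleGraph V) (T : Finset (Sym2 V)) : Prop :=
  ↑T ⊆ G.edgeSet ∧ (SimpleGraph.fromEdgeSet (↑T : Set (Sym2 V))).IsTree

/-- The normalizing constant `∑ a, exp (-u a)` of the Gibbs distribution with energy `u`. -/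
noncomputable def partitionFn {Ω : Type*} [Fintype Ω] (u : Ω → ℝ) : ℝ :=
  ∑ a, Real.exp (-u a)

lemma partitionFn_pos {Ω : Type*} [Fintype Ω] [Nonempty Ω] (u : Ω → ℝ) : 0 < partitionFn u :=
  Finset.sum_pos (fun _ _ => Real.exp_pos _) Finset.univ_nonempty

/-- The Gibbs distribution with energy `u`: the probability of `a` is proportional to
`exp (-u a)`. -/
noncomputable def gibbs {Ω : Type*} [Fintype Ω] [Nonempty Ω] (u : Ω → ℝ) : PMF Ω :=
  PMF.ofFintype (fun a => ENNReal.ofReal (Real.exp (-u a) / partitionFn u)) (by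
    rw [← ENNReal.ofReal_sum_of_nonneg
      (fun a _ => div_nonneg (Real.exp_pos _).le (partitionFn_pos u).le), ← Finset.sum_div]
    change ENNReal.ofReal (partitionFn u / partitionFn u) = 1
    rw [div_self (partitionFn_pos u).ne', ENNReal.ofReal_one])

lemma gibbs_apply {Ω : Type*} [Fintype Ω] [Nonempty Ω] (u : Ω → ℝ) (a : Ω) :
    gibbs u a = ENNReal.ofReal (Real.exp (-u a) / partitionFn u) := rfl

/-- If two energies are within `c` of each other, the density and the normalizing constant each
contribute a factor of at most `exp c`. -/
lemma prob_gibbs_le {Ω : Type*} [Fintype Ω] [Nonempty Ω] {u v : Ω → ℝ} {c : ℝ}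
    (h : ∀ a, |u a - v a| ≤ c) (S : Set Ω) :
    prob (gibbs u) S ≤ ENNReal.ofReal (Real.exp (2 * c)) * prob (gibbs v) S := by
  classical
  have hZ : partitionFn v ≤ Real.exp c * partitionFn u := by
    rw [partitionFn, partitionFn, Finset.mul_sum]
    refine Finset.sum_le_sum fun a _ => ?_
    rw [← Real.exp_add, Real.exp_le_exp]
    linarith [(abs_le.1 (h a)).2]
  have hp : ∀ a, gibbs u a ≤ ENNReal.ofReal (Real.exp (2 * c)) * gibbs v a := by
    intro a
    rw [gibbs_apply, gibbs_apply, ← ENNReal.ofReal_mul (Real.exp_pos _).le]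
    apply ENNReal.ofReal_le_ofReal
    have hu := partitionFn_pos u
    have hv := partitionFn_pos v
    rw [← mul_div_assoc, div_le_div_iff₀ hu hv]
    have hN : Real.exp (-u a) ≤ Real.exp c * Real.exp (-v a) := by
      rw [← Real.exp_add, Real.exp_le_exp]
      linarith [(abs_le.1 (h a)).1]
    calc Real.exp (-u a) * partitionFn v
        ≤ (Real.exp c * Real.exp (-v a)) * (Real.exp c * partitionFn u) := by gcongr
      _ = Real.exp (2 * c) * Real.exp (-v a) * partitionFn u := by
          rw [two_mul, Real.exp_add]; ring
  simp only [prob, PMF.toOuterMeasure_apply_fintype, Finset.mul_sum]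
  refine Finset.sum_le_sum fun a _ => ?_
  by_cases ha : a ∈ S
  · simpa [ha] using hp a
  · simp [ha]

/-- Union bound: each outcome of energy more than `t` above that of some other outcome has
probability at most `exp (-t)`. -/
lemma le_prob_gibbs {Ω : Type*} [Fintype Ω] [Nonempty Ω] (u : Ω → ℝ) {t γ : ℝ}
    (h : (Fintype.card Ω : ℝ) * Real.exp (-t) ≤ γ) :
    ENNReal.ofReal (1 - γ) ≤ prob (gibbs u) {a | ∀ b, u a ≤ u b + t} := by
  classical
  set S : Set Ω := {a | ∀ b, u a ≤ u b + t} with hS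
  have hγ : 0 ≤ γ := le_trans (by positivity) h
  have hbad : ∀ a ∉ S, gibbs u a ≤ ENNReal.ofReal (Real.exp (-t)) := by
    intro a ha
    simp only [hS, Set.mem_ofPred_eq, not_forall, not_le] at ha
    obtain ⟨b, hb⟩ := ha
    rw [gibbs_apply]
    apply ENNReal.ofReal_le_ofReal
    rw [div_le_iff₀ (partitionFn_pos u)]
    calc Real.exp (-u a) ≤ Real.exp (-t) * Real.exp (-u b) := by
          rw [← Real.exp_add, Real.exp_le_exp]; linarith
      _ ≤ Real.exp (-t) * partitionFn u := by
          gcongr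
          exact Finset.single_le_sum (f := fun a => Real.exp (-u a))
            (fun _ _ => (Real.exp_pos _).le) (Finset.mem_univ b)
  have hcompl : ∑ a, Sᶜ.indicator (gibbs u) a ≤ ENNReal.ofReal γ := by
    calc ∑ a, Sᶜ.indicator (gibbs u) a
        ≤ ∑ _a : Ω, ENNReal.ofReal (Real.exp (-t)) := by
          refine Finset.sum_le_sum fun a _ => ?_
          by_cases ha : a ∈ S
          · simp [ha]
          · simpa [ha] using hbad a ha
      _ = ENNReal.ofReal ((Fintype.card Ω : ℝ) * Real.exp (-t)) := by
          rw [Finset.sum_const, nsmul_eq_mul, ENNReal.ofReal_mul (Nat.cast_nonneg _),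
            ENNReal.ofReal_natCast, Finset.card_univ]
      _ ≤ ENNReal.ofReal γ := ENNReal.ofReal_le_ofReal h
  have htot : (∑ a, S.indicator (gibbs u) a) + ∑ a, Sᶜ.indicator (gibbs u) a = 1 := by
    rw [← Finset.sum_add_distrib]
    simp only [Set.indicator_self_add_compl_apply]
    rw [← tsum_fintype (L := .unconditional _)]
    exact (gibbs u).tsum_coe
  rw [prob, PMF.toOuterMeasure_apply_fintype, ENNReal.ofReal_sub _ hγ, ENNReal.ofReal_one,
    tsub_le_iff_right, ← htot]
  gcongr

lemma IsSpanningTree.card_add_one {V : Type*} [Fintype V] {G : SimpleGraph V}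
    {T : Finset (Sym2 V)} (hT : IsSpanningTree G T) : T.card + 1 = Fintype.card V := by
  classical
  rw [← hT.2.card_edgeFinset]
  congr 2
  ext e
  simp only [SimpleGraph.mem_edgeFinset, SimpleGraph.edgeSet_fromEdgeSet, Set.mem_sdiff,
    Finset.mem_coe]
  exact ⟨fun he => ⟨he, G.not_isDiag_of_mem_edgeSet (hT.1 he)⟩, fun he => he.1⟩

lemma exists_isSpanningTree {V : Type*} [Fintype V] {G : SimpleGraph V}
    (hG : G.Connected) : ∃ T, IsSpanningTree G T := by
  classical
  obtain ⟨H, hle, hH⟩ := hG.exists_isTree_le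
  refine ⟨H.edgeFinset, ?_, ?_⟩
  · simpa using hle
  · simpa using hH

lemma card_spanningTree_le {V : Type*} [Fintype V] (G : SimpleGraph V)
    [DecidableRel G.Adj] [Fintype {T : Finset (Sym2 V) // IsSpanningTree G T}]
    [Fintype G.edgeSet] :
    Fintype.card {T : Finset (Sym2 V) // IsSpanningTree G T} ≤
      G.edgeFinset.card ^ (Fintype.card V - 1) := by
  classical
  refine le_trans ?_ (Nat.choose_le_pow _ _)
  rw [← Finset.card_powersetCard, ← Finset.card_univ]
  refine Finset.card_le_card_of_injOn Subtype.val (fun T _ => ?_) Subtype.val_injective.injOn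
  have := T.2.card_add_one
  rw [Finset.mem_coe, Finset.mem_powersetCard]
  refine ⟨fun e he => SimpleGraph.mem_edgeFinset.2 (T.2.1 he), by omega⟩

/-- **Private almost-minimum spanning tree.**  For every connected graph `G`, `ε > 0` and
`γ ∈ (0,1)`, there is an `ε`-differentially private algorithm releasing a spanning tree whose
weight is, with probability `1 - γ`, at most `(2(V-1)/ε)·log(E/γ)` larger than that of any
spanning tree (in particular of a minimum-weight one). -/
theorem private_almost_minimum_spanning_tree {V : Type*} [Fintype V] [DecidableEq V]
    (G : SimpleGraph V) [DecidableRel G.Adj] (hG : G.Connected)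
    (ε γ : ℝ) (hε : 0 < ε) (hγ : γ ∈ Set.Ioo (0 : ℝ) 1) :
    ∃ A : (Sym2 V → ℝ) → PMF {T : Finset (Sym2 V) // IsSpanningTree G T},
      IsDP (NeighboringR G) A ε 0 ∧
      ∀ w : Sym2 V → ℝ,
        ENNReal.ofReal (1 - γ) ≤
          prob (A w) {T | ∀ T' : Finset (Sym2 V), IsSpanningTree G T' →
            ∑ e ∈ T.1, w e ≤ ∑ e ∈ T', w e +
              (2 * ((Fintype.card V : ℝ) - 1) / ε) *
                Real.log ((G.edgeFinset.card : ℝ) / γ)} := by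
  classical
  obtain ⟨hγ0, hγ1⟩ := hγ
  obtain ⟨T₀, hT₀⟩ := exists_isSpanningTree hG
  have : Nonempty {T : Finset (Sym2 V) // IsSpanningTree G T} := ⟨⟨T₀, hT₀⟩⟩
  let : Fintype {T : Finset (Sym2 V) // IsSpanningTree G T} := Fintype.ofFinite _
  refine ⟨fun w => gibbs fun T => ε / 2 * ∑ e ∈ T.1, w e, ?_, ?_⟩
  · intro w w' hN S
    rw [ENNReal.ofReal_zero, add_zero]
    have key := prob_gibbs_le (c := ε / 2)
      (u := fun T : {T : Finset (Sym2 V) // IsSpanningTree G T} => ε / 2 * ∑ e ∈ T.1, w e)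
      (v := fun T => ε / 2 * ∑ e ∈ T.1, w' e) (fun T => ?_) S
    · rwa [mul_div_cancel₀ ε two_ne_zero] at key
    · rw [← mul_sub, ← Finset.sum_sub_distrib, abs_mul, abs_of_pos (half_pos hε)]
      refine mul_le_of_le_one_right (half_pos hε).le ?_
      calc |∑ e ∈ T.1, (w e - w' e)| ≤ ∑ e ∈ T.1, |w e - w' e| :=
            Finset.abs_sum_le_sum_abs _ _
        _ ≤ ∑ e ∈ G.edgeFinset, |w e - w' e| :=
            Finset.sum_le_sum_of_subset_of_nonneg
              (fun e he => SimpleGraph.mem_edgeFinset.2 (T.2.1 he)) fun _ _ _ => abs_nonneg _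
        _ ≤ 1 := hN
  · intro w
    have hcard := hT₀.card_add_one
    -- For a single vertex `E = 0`, so the logarithm is a junk value, but its coefficient is `0`.
    rcases Nat.eq_zero_or_pos T₀.card with h0 | hpos
    · have hempty : ∀ T, IsSpanningTree G T → T = ∅ := fun T hT => by
        have := hT.card_add_one
        exact Finset.card_eq_zero.1 (by omega)
      have hV : (Fintype.card V : ℝ) = 1 := by rw [← hcard, h0]; norm_num
      rw [(Set.eq_univ_iff_forall (s := {T : {T : Finset (Sym2 V) // IsSpanningTree G T} | _})).2
        fun T T' hT' => by rw [hempty _ T.2, hempty _ hT', hV]; simp]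
      rw [prob, (PMF.toOuterMeasure_apply_eq_one_iff _ _).2 (Set.subset_univ _)]
      exact ENNReal.ofReal_le_one.2 (by linarith)
    · set k := T₀.card with hk
      have hV : (Fintype.card V : ℝ) - 1 = k := by rw [← hcard]; push_cast; ring
      have hE : 0 < G.edgeFinset.card := lt_of_lt_of_le hpos
        (Finset.card_le_card fun e he => SimpleGraph.mem_edgeFinset.2 (hT₀.1 he))
      have hE' : (0 : ℝ) < G.edgeFinset.card := by exact_mod_cast hE
      rw [hV]
      have hexp : Real.exp (-(k * Real.log ((G.edgeFinset.card : ℝ) / γ))) =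
          (γ / G.edgeFinset.card) ^ k := by
        rw [← mul_neg, ← Real.log_inv, inv_div, Real.exp_nat_mul, Real.exp_log (by positivity)]
      have hN : (Fintype.card {T : Finset (Sym2 V) // IsSpanningTree G T} : ℝ) ≤
          (G.edgeFinset.card : ℝ) ^ k := by
        have h := card_spanningTree_le G
        rw [← hcard, Nat.add_sub_cancel] at h
        exact_mod_cast h
      refine (le_prob_gibbs (fun T : {T : Finset (Sym2 V) // IsSpanningTree G T} =>
        ε / 2 * ∑ e ∈ T.1, w e) (t := k * Real.log ((G.edgeFinset.card : ℝ) / γ))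
        (γ := γ) ?_).trans ?_
      · rw [hexp]
        calc (Fintype.card {T : Finset (Sym2 V) // IsSpanningTree G T} : ℝ) *
              (γ / G.edgeFinset.card) ^ k
            ≤ (G.edgeFinset.card : ℝ) ^ k * (γ / G.edgeFinset.card) ^ k := by gcongr
          _ = γ ^ k := by rw [← mul_pow, mul_div_cancel₀ _ hE'.ne']
          _ ≤ γ := pow_le_of_le_one hγ0.le hγ1.le hpos.ne'
      -- An excess of `k * log (E / γ)` in energy is one of `(2 * k / ε) * log (E / γ)` in weight.
      · refine MeasureTheory.OuterMeasure.mono _ fun T hT T' hT' => ?_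
        have h : ε / 2 * ∑ e ∈ T.1, w e ≤ ε / 2 * ∑ e ∈ T', w e +
          k * Real.log ((G.edgeFinset.card : ℝ) / γ) := hT ⟨T', hT'⟩
        refine le_of_mul_le_mul_left (h.trans_eq ?_) (half_pos hε)
        field_simp
end

section
/- Fix n ≥ 1, ε ≥ 0, δ ≥ 0, and α ≥ 0. Let A : (Fin n × {0,1} × {0,1} → ℝ) → PMF({0,1}^n) be a randomized algorithm that is (ε,δ)-differentially private with respect to ℓ1-neighboring weight functions and such that for every weight function w : Fin n × {0,1} × {0,1} → {0,1}, the expected approximation error of the released perfect matching satisfies E_{y ← A(w)}[M_w(y)] − min_{z ∈ {0,1}^n} M_w(z) ≤ α. Then there exists a randomized algorithm B : {0,1}^n → PMF({0,1}^n) that is (2ε, (1+e^ε)δ)-differentially private with respect to Hamming-neighboring inputs and such that for every x ∈ {0,1}^n, the expected Hamming distance satisfies E_{y ← B(x)}[d_H(x,y)] ≤ α. -/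
/-!
Encode a string `x` as the `{0,1}`-valued weight function `encW x` that puts weight `1` on the
single edge `L(i,0)–R(i,1-x_i)` of each gadget `i`. The matching `y` pays `1` in gadget `i`
exactly when `y_i ≠ x_i`, so its weight is the Hamming distance from `x` to `y`
(`Mw_encW`), and the minimum weight is `0`, attained at `x`. Hence `B x = A (encW x)` has expected
Hamming distance at most `α`.

The encodings of two Hamming-neighboring strings are at `ℓ1` distance `2`, but both are at
distance `1` from their pointwise minimum (`sum_encW_sub_min`). Applying the privacy guarantee
along this path of two steps gives the parameters `(2ε, (1 + e^ε)δ)` (`IsDP.two_step`).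
-/

open scoped ENNReal NNReal

/-- Two real-valued weight functions on the edges of the matching lower-bound graph are
neighboring if their `ℓ1` distance is at most `1`. -/
def L1NeighborR {ι : Type*} [Fintype ι] (w w' : ι → ℝ) : Prop :=
  ∑ i, |w i - w' i| ≤ 1

/-- The weight of the perfect matching encoded by `y : Fin n → Bool` in the gadget graph:
matching `y` uses in gadget `i` the edges `L(i,0)–R(i,y_i)` and `L(i,1)–R(i,1-y_i)`. -/
def Mw {n : ℕ} (w : Fin n × Bool × Bool → ℝ) (y : Fin n → Bool) : ℝ :=
  ∑ i, (w (i, false, y i) + w (i, true, !(y i)))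

/-- The weight function encoding the string `x`: weight `1` on the edge `L(i,0)–R(i,1-x_i)` of
every gadget `i`, and weight `0` on all other edges. -/
def encW {n : ℕ} (x : Fin n → Bool) : Fin n × Bool × Bool → ℝ :=
  fun p => if p.2.1 = false ∧ p.2.2 = !(x p.1) then 1 else 0

lemma encW_zero_or_one {n : ℕ} (x : Fin n → Bool) (p : Fin n × Bool × Bool) :
    encW x p = 0 ∨ encW x p = 1 := by
  unfold encW
  split_ifs <;> simp

lemma hammingDist_eq_sum {n : ℕ} (x y : Fin n → Bool) :
    (hammingDist x y : ℝ) = ∑ i, if x i ≠ y i then (1 : ℝ) else 0 := by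
  simp only [hammingDist, Finset.sum_boole]

lemma Mw_encW {n : ℕ} (x y : Fin n → Bool) : Mw (encW x) y = (hammingDist x y : ℝ) := by
  rw [hammingDist_eq_sum]
  unfold Mw encW
  refine Finset.sum_congr rfl fun i _ => ?_
  cases hx : x i <;> cases hy : y i <;> simp

/-- Passing from `encW x` to the pointwise minimum of `encW x` and `encW y` removes the unit edge
of exactly those gadgets in which `x` and `y` differ. -/
lemma sum_encW_sub_min {n : ℕ} (x y : Fin n → Bool) :
    ∑ p, |encW x p - min (encW x p) (encW y p)| = (hammingDist x y : ℝ) := by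
  rw [hammingDist_eq_sum, Fintype.sum_prod_type]
  refine Finset.sum_congr rfl fun i _ => ?_
  rw [Fintype.sum_prod_type]
  cases hx : x i <;> cases hy : y i <;> simp [encW, hx, hy]

/-- Group privacy for a path of length two. -/
lemma IsDP.two_step {X Y : Type*} {N : X → X → Prop} {A : X → PMF Y} {ε δ : ℝ}
    (h : IsDP N A ε δ) {u v w : X} (huv : N u v) (hvw : N v w) (S : Set Y) :
    prob (A u) S ≤ ENNReal.ofReal (Real.exp (2 * ε)) * prob (A w) S
      + ENNReal.ofReal ((1 + Real.exp ε) * δ) := by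
  have he : 0 ≤ Real.exp ε := (Real.exp_pos ε).le
  calc prob (A u) S
      ≤ ENNReal.ofReal (Real.exp ε) * prob (A v) S + ENNReal.ofReal δ := h u v huv S
    _ ≤ ENNReal.ofReal (Real.exp ε) *
          (ENNReal.ofReal (Real.exp ε) * prob (A w) S + ENNReal.ofReal δ)
          + ENNReal.ofReal δ := by
        gcongr
        exact h v w hvw S
    _ = ENNReal.ofReal (Real.exp (2 * ε)) * prob (A w) S
          + ENNReal.ofReal ((1 + Real.exp ε) * δ) := by
        rw [two_mul, Real.exp_add, ENNReal.ofReal_mul he, ENNReal.ofReal_mul (by positivity),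
          ENNReal.ofReal_add zero_le_one he, ENNReal.ofReal_one]
        ring

/-- **Reduction from reconstruction to private matchings.**  If an `(ε,δ)`-differentially
private algorithm releases perfect matchings of the gadget graph with expected approximation
error at most `α` on every `{0,1}`-valued weight function, then there is a
`(2ε, (1+e^ε)δ)`-differentially private algorithm `B` on `{0,1}^n` with expected Hamming
distance `E[d_H(x, B(x))] ≤ α` for every input `x`. -/
theorem matching_reduction (n : ℕ) (hn : 1 ≤ n) (ε δ α : ℝ)
    (hε : 0 ≤ ε) (hδ : 0 ≤ δ) (hα : 0 ≤ α)
    (A : (Fin n × Bool × Bool → ℝ) → PMF (Fin n → Bool))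
    (hDP : IsDP L1NeighborR A ε δ)
    (hAcc : ∀ w : Fin n × Bool × Bool → ℝ, (∀ p, w p = 0 ∨ w p = 1) →
      expVal (A w) (Mw w) - ⨅ z : Fin n → Bool, Mw w z ≤ α) :
    ∃ B : (Fin n → Bool) → PMF (Fin n → Bool),
      IsDP (fun x y => HammingNeighbor x y) B (2 * ε) ((1 + Real.exp ε) * δ) ∧
      ∀ x : Fin n → Bool, expVal (B x) (fun y => (hammingDist x y : ℝ)) ≤ α := by
  refine ⟨fun x => A (encW x), ?_, fun x => ?_⟩
  · intro x y hxy S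
    have hdist : hammingDist x y = 1 := hxy
    have hdist_symm : hammingDist y x = 1 := by rw [hammingDist_comm, hdist]
    -- In the gadget where `x` and `y` differ, the pointwise minimum vanishes.
    refine hDP.two_step (v := fun p => min (encW x p) (encW y p)) ?_ ?_ S
    · exact (by rw [sum_encW_sub_min, hdist, Nat.cast_one] :
        ∑ p, |encW x p - min (encW x p) (encW y p)| = 1).le
    · have hsum := sum_encW_sub_min y x
      rw [hdist_symm, Nat.cast_one] at hsum
      unfold L1NeighborR
      refine le_of_eq_of_le (Finset.sum_congr rfl fun p _ => ?_) hsum.le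
      rw [abs_sub_comm, min_comm]
  · have hMw : Mw (encW x) = fun y => (hammingDist x y : ℝ) := funext (Mw_encW x)
    have hinf : ⨅ z, Mw (encW x) z ≤ 0 := by
      refine (ciInf_le (Set.finite_range _).bddBelow x).trans ?_
      simp [Mw_encW]
    have hacc := hAcc (encW x) (encW_zero_or_one x)
    rw [← hMw]
    linarith
end
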